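/- arXiv:2312.07373 — 3 statements merged into one kernel-verified Lean document; each statement's English description precedes it below -/
import Mathlib

section
/- Fix β > 0, d ≥ 1, s ≥ 0 and ℓ ≥ 0, and suppose f ∈ A(s, ℓ, ℓ). Then for all R > 0 and all p ≥ 2·p_M(s, ℓ) there exists a constant L̃ = L̃(R, p) > 0 such that for all probability measures μ ∈ P_{p,R}(ℝ^d) and ν ∈ P_p(ℝ^d), ‖√C_β(μ) − √C_β(ν)‖_F ≤ L̃ · W_p(μ, ν). -/
open MeasureTheory ENNReal
open scoped NNReal

noncomputable section

/-- Euclidean space `ℝ^d`. -/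
abbrev Rd (d : ℕ) := EuclideanSpace ℝ (Fin d)

/-- The weight function `x ↦ exp (-β f x)`. -/
def wFn (β : ℝ) {d : ℕ} (f : Rd d → ℝ) (x : Rd d) : ℝ := Real.exp (-β * f x)

/-- The weighted mean `M_β(μ) = (∫ x e^{-β f x} dμ) / (∫ e^{-β f x} dμ)`. -/
def wMean (β : ℝ) {d : ℕ} (f : Rd d → ℝ) (μ : Measure (Rd d)) : Rd d :=
  (∫ x, wFn β f x ∂μ)⁻¹ • ∫ x, wFn β f x • x ∂μ

/-- The weighted covariance `C_β(μ)`, a `d × d` matrix. -/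
def wCov (β : ℝ) {d : ℕ} (f : Rd d → ℝ) (μ : Measure (Rd d)) :
    Matrix (Fin d) (Fin d) ℝ := fun i j =>
  (∫ x, wFn β f x ∂μ)⁻¹ *
    ∫ x, wFn β f x * ((x i - wMean β f μ i) * (x j - wMean β f μ j)) ∂μ

/-- Frobenius norm of a matrix. -/
def frobNorm {m n : ℕ} (A : Matrix (Fin m) (Fin n) ℝ) : ℝ :=
  Real.sqrt (∑ i, ∑ j, (A i j) ^ 2)

/-- `S` is the (unique) positive semidefinite square root of `A`. -/
def IsPSDSqrt {d : ℕ} (S A : Matrix (Fin d) (Fin d) ℝ) : Prop :=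
  S.PosSemidef ∧ S * S = A

/-- `μ ∈ P_{p,R}`: the `p`-th moment of `μ` is bounded, `(∫ |x|^p dμ)^{1/p} ≤ R`. -/
def MomLE (p R : ℝ) {d : ℕ} (μ : Measure (Rd d)) : Prop :=
  ∫⁻ x, (‖x‖₊ : ℝ≥0∞) ^ p ∂μ ≤ ENNReal.ofReal (R ^ p)

/-- `μ ∈ P_p`: the `p`-th moment of `μ` is finite. -/
def MomFin (p : ℝ) {d : ℕ} (μ : Measure (Rd d)) : Prop :=
  ∫⁻ x, (‖x‖₊ : ℝ≥0∞) ^ p ∂μ < ⊤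

/-- The Wasserstein-`p` distance between two probability measures on `ℝ^d`:
the infimum over couplings `π` of `μ` and `ν` of `(∬ |x - y|^p dπ)^{1/p}`. -/
def Wp (p : ℝ) {d : ℕ} (μ ν : Measure (Rd d)) : ℝ :=
  (sInf {c : ℝ≥0∞ | ∃ π : Measure (Rd d × Rd d),
      π.map Prod.fst = μ ∧ π.map Prod.snd = ν ∧
      c = (∫⁻ z, (‖z.1 - z.2‖₊ : ℝ≥0∞) ^ p ∂π) ^ (1 / p)}).toReal

/-- `f_* = inf f`. -/
def fStar {d : ℕ} (f : Rd d → ℝ) : ℝ := sInf (Set.range f)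

/-- The class `A(s, ℓ, u)` of objective functions: `f` is bounded from below,
locally Lipschitz with growth exponent `s`, and `f - inf f` grows at least like
`|x|^ℓ` and at most like `|x|^u`. -/
structure ClassA {d : ℕ} (s ℓ u : ℝ) (f : Rd d → ℝ) : Prop where
  bddBelow : BddBelow (Set.range f)
  lip : ∃ Lf > 0, ∀ x y : Rd d, |f x - f y| ≤ Lf * (1 + ‖x‖ + ‖y‖) ^ s * ‖x - y‖
  growth_lower : ∃ cl > 0, ∃ Cl > 0, ∀ x : Rd d, cl * ‖x‖ ^ ℓ - Cl ≤ f x - fStar f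
  growth_upper : ∃ cu > 0, ∃ Cu > 0, ∀ x : Rd d, f x - fStar f ≤ cu * ‖x‖ ^ u + Cu

/-- `p_M(s, ℓ) = s + 2` if `ℓ = 0`, and `1` if `ℓ > 0`. -/
def pM (s ℓ : ℝ) : ℝ := if ℓ = 0 then s + 2 else 1

/-- `p_C(s, ℓ) = s + 3` if `ℓ = 0`, and `1` if `ℓ > 0`. -/
def pC (s ℓ : ℝ) : ℝ := if ℓ = 0 then s + 3 else 1

section Hilb
variable {H : Type*} [NormedAddCommGroup H] [InnerProductSpace ℝ H]

lemma subBessel {d : ℕ} (E : Fin d → H) (hE : ∀ i k, i ≠ k → inner ℝ (E i) (E k) = 0)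
    (hE1 : ∀ i, inner ℝ (E i) (E i) ≤ (1 : ℝ)) (x : H) :
    ∑ i, (inner ℝ (E i) x) ^ 2 ≤ inner ℝ x x := by
  have h0 : 0 ≤ inner ℝ (x - ∑ i, (inner ℝ (E i) x : ℝ) • E i)
      (x - ∑ i, (inner ℝ (E i) x : ℝ) • E i) := real_inner_self_nonneg
  have h1 : inner ℝ x (∑ i, (inner ℝ (E i) x : ℝ) • E i) = ∑ i, (inner ℝ (E i) x : ℝ) ^ 2 := by
    rw [inner_sum]
    refine Finset.sum_congr rfl fun i _ => ?_
    rw [inner_smul_right, real_inner_comm, sq]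
  have h2 : inner ℝ (∑ i, (inner ℝ (E i) x : ℝ) • E i) (∑ i, (inner ℝ (E i) x : ℝ) • E i)
      ≤ ∑ i, (inner ℝ (E i) x : ℝ) ^ 2 := by
    rw [inner_sum]
    refine Finset.sum_le_sum fun i _ => ?_
    rw [sum_inner, Finset.sum_eq_single i]
    · rw [inner_smul_left, inner_smul_right]
      simp only [conj_trivial]
      nlinarith [hE1 i, sq_nonneg (inner ℝ (E i) x : ℝ)]
    · intro j _ hj
      rw [inner_smul_left, inner_smul_right, hE j i hj]; simp
    · simp
  rw [inner_sub_left, inner_sub_right, inner_sub_right, real_inner_comm x (∑ i, _), h1] at h0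
  linarith

/-- spectral data of a psd square root of a Gram matrix -/
lemma gram_spectral {d : ℕ} (g : Fin d → H) (S : Matrix (Fin d) (Fin d) ℝ)
    (hS : S.PosSemidef) (hSS : ∀ i j, (S * S) i j = inner ℝ (g i) (g j)) :
    ∃ (U : Matrix (Fin d) (Fin d) ℝ) (σ : Fin d → ℝ) (E : Fin d → H),
      U * U.transpose = 1 ∧ U.transpose * U = 1 ∧ (∀ i, 0 ≤ σ i) ∧
      (∀ k l, S k l = ∑ i, U k i * σ i * U l i) ∧
      (∀ i k, i ≠ k → inner ℝ (E i) (E k) = 0) ∧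
      (∀ i, inner ℝ (E i) (E i) ≤ (1 : ℝ)) ∧
      (∀ k, g k = ∑ i, (U k i * σ i) • E i) ∧ ∑ k, inner ℝ (g k) (g k) = ∑ i, σ i ^ 2 := by
  classical
  obtain ⟨U, σ, h1, h2, h3, h4⟩ : ∃ (U : Matrix (Fin d) (Fin d) ℝ) (σ : Fin d → ℝ),
      U * U.transpose = 1 ∧ U.transpose * U = 1 ∧ (∀ i, 0 ≤ σ i) ∧
      S = U * Matrix.diagonal σ * U.transpose := by
    refine ⟨hS.1.eigenvectorUnitary, hS.1.eigenvalues, ?_, ?_, hS.eigenvalues_nonneg, ?_⟩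
    · have := Unitary.mul_star_self_of_mem hS.1.eigenvectorUnitary.2
      simpa [Matrix.star_eq_conjTranspose, Matrix.conjTranspose_eq_transpose_of_trivial] using this
    · have := Unitary.star_mul_self_of_mem hS.1.eigenvectorUnitary.2
      simpa [Matrix.star_eq_conjTranspose, Matrix.conjTranspose_eq_transpose_of_trivial] using this
    · have := hS.1.spectral_theorem
      rw [Unitary.conjStarAlgAut_apply] at this
      simpa [Matrix.star_eq_conjTranspose, Matrix.conjTranspose_eq_transpose_of_trivial,
        Function.comp_def] using this
  have h5 : U.transpose * (S * S) * U = Matrix.diagonal (fun i => σ i ^ 2) := by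
    have : U.transpose * (S * S) * U = (U.transpose * U) * Matrix.diagonal σ *
      (U.transpose * U) * Matrix.diagonal σ * (U.transpose * U) := by
      rw [h4]; simp only [Matrix.mul_assoc]
    rw [this, h2]
    simp [Matrix.diagonal_mul_diagonal, sq]
  set G : Fin d → H := fun i => ∑ k, U k i • g k with hG
  have hGG : ∀ i j, inner ℝ (G i) (G j) = if i = j then σ i ^ 2 else 0 := by
    intro i j
    have := congrFun (congrFun h5 i) j
    rw [Matrix.diagonal_apply] at this
    rw [← this, Matrix.mul_apply]
    simp only [hG, inner_sum, Matrix.mul_apply (M := U.transpose), Matrix.transpose_apply, hSS,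
      sum_inner, inner_smul_left, inner_smul_right, conj_trivial, Finset.sum_mul]
    refine Finset.sum_congr rfl fun a _ => ?_
    rw [Finset.mul_sum]
    refine Finset.sum_congr rfl fun b _ => ?_
    ring
  have hG0 : ∀ i, σ i • (σ i)⁻¹ • G i = G i := by
    intro i
    by_cases h : σ i = 0
    · have : inner ℝ (G i) (G i) = 0 := by rw [hGG]; simp [h]
      rw [inner_self_eq_zero] at this
      simp [this]
    · rw [smul_smul, mul_inv_cancel₀ h, one_smul]
  have hgG : ∀ k, g k = ∑ i, U k i • G i := by
    intro k
    simp only [hG, Finset.smul_sum, smul_smul]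
    rw [Finset.sum_comm]
    have : ∀ l, ∑ i, (U k i * U l i) • g l = (if k = l then (1:ℝ) else 0) • g l := by
      intro l
      rw [← Finset.sum_smul]
      congr 1
      have := congrFun (congrFun h1 k) l
      rw [Matrix.mul_apply, Matrix.one_apply] at this
      simpa using this
    simp [this]
  refine ⟨U, σ, fun i => (σ i)⁻¹ • G i, h1, h2, h3, ?_, ?_, ?_, ?_, ?_⟩
  · intro k l
    rw [h4, Matrix.mul_apply]
    simp [Matrix.mul_diagonal]
  · intro i k hik
    simp [inner_smul_left, inner_smul_right, hGG, hik]
  · intro i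
    simp only [inner_smul_left, inner_smul_right, hGG, conj_trivial, if_true]
    by_cases h : σ i = 0
    · simp [h]
    · field_simp; rfl
  · intro k
    conv_lhs => rw [hgG k]
    refine Finset.sum_congr rfl fun i _ => ?_
    rw [← smul_smul, hG0]
  · have e1 : ∑ k, inner ℝ (g k) (g k) = Matrix.trace (S * S) := by
      simp [Matrix.trace, hSS]
    have e2 : Matrix.trace (S * S) = Matrix.trace (U.transpose * (S * S) * U) := by
      rw [Matrix.trace_mul_comm (U.transpose * (S * S)) U, ← Matrix.mul_assoc U, h1, one_mul]
    rw [e1, e2, h5, Matrix.trace_diagonal]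

lemma frob_sq {m n : ℕ} (A : Matrix (Fin m) (Fin n) ℝ) :
    frobNorm A ^ 2 = ∑ i, ∑ j, (A i j) ^ 2 :=
  Real.sq_sqrt (Finset.sum_nonneg fun _ _ => Finset.sum_nonneg fun _ _ => sq_nonneg _)

lemma psd_sq_sum {d : ℕ} (g : Fin d → H) (S : Matrix (Fin d) (Fin d) ℝ)
    (hS : S.PosSemidef) (hSS : ∀ i j, (S * S) i j = inner ℝ (g i) (g j)) :
    ∑ k, ∑ l, S k l ^ 2 = ∑ k, inner ℝ (g k) (g k) := by
  refine Finset.sum_congr rfl fun k _ => ?_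
  rw [← hSS, Matrix.mul_apply]
  refine Finset.sum_congr rfl fun l _ => ?_
  have := hS.1.apply l k
  simp only [star_trivial] at this
  rw [sq, ← this]

lemma araki {d : ℕ} (g h : Fin d → H) (S T : Matrix (Fin d) (Fin d) ℝ)
    (hS : S.PosSemidef) (hSS : ∀ i j, (S * S) i j = inner ℝ (g i) (g j))
    (hT : T.PosSemidef) (hTT : ∀ i j, (T * T) i j = inner ℝ (h i) (h j)) :
    frobNorm (S - T) ^ 2 ≤ 2 * ∑ i, ‖g i - h i‖ ^ 2 := by
  have sS := psd_sq_sum g S hS hSS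
  have sT := psd_sq_sum h T hT hTT
  obtain ⟨U, σ, E, u1, u2, σ0, hSU, hE, hE1, hg, hgs⟩ := gram_spectral g S hS hSS
  obtain ⟨V, τ, F, v1, v2, τ0, hTV, hF, hF1, hh, hhs⟩ := gram_spectral h T hT hTT
  set c : Fin d → Fin d → ℝ := fun i j => ∑ k, U k i * V k j with hc
  set a : Fin d → Fin d → ℝ := fun i j => inner ℝ (E i) (F j) with ha
  have hN : ∑ k, inner ℝ (g k) (h k) = ∑ i, ∑ j, σ i * τ j * a i j * c i j := by
    have : ∀ k, inner ℝ (g k) (h k) = ∑ i, ∑ j, σ i * τ j * a i j * (U k i * V k j) := by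
      intro k
      rw [hg, hh, sum_inner]
      refine Finset.sum_congr rfl fun i _ => ?_
      rw [inner_sum]
      refine Finset.sum_congr rfl fun j _ => ?_
      simp only [inner_smul_left, inner_smul_right, conj_trivial, ha]; ring
    simp only [this, hc, Finset.mul_sum]
    rw [Finset.sum_comm]
    refine Finset.sum_congr rfl fun i _ => ?_
    rw [Finset.sum_comm]
  have hST : ∑ k, ∑ l, S k l * T k l = ∑ i, ∑ j, σ i * τ j * c i j ^ 2 := by
    have : ∀ k l, S k l * T k l = ∑ i, ∑ j, σ i * τ j * ((U k i * V k j) * (U l i * V l j)) := by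
      intro k l
      rw [hSU, hTV, Finset.sum_mul_sum]
      refine Finset.sum_congr rfl fun i _ => Finset.sum_congr rfl fun j _ => ?_
      ring
    have e : ∀ i j, σ i * τ j * c i j ^ 2 =
        ∑ k, ∑ l, σ i * τ j * ((U k i * V k j) * (U l i * V l j)) := by
      intro i j
      simp only [hc, sq]
      rw [Finset.sum_mul_sum, Finset.mul_sum]
      simp only [Finset.mul_sum]
    simp only [this, e]
    have s1 : ∀ k, ∑ l, ∑ i, ∑ j, σ i * τ j * ((U k i * V k j) * (U l i * V l j))
      = ∑ i, ∑ j, ∑ l, σ i * τ j * ((U k i * V k j) * (U l i * V l j)) := by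
      intro k
      rw [Finset.sum_comm]
      refine Finset.sum_congr rfl fun i _ => ?_
      rw [Finset.sum_comm]
    simp only [s1]
    rw [Finset.sum_comm]
    refine Finset.sum_congr rfl fun i _ => ?_
    rw [Finset.sum_comm]
  have hb1 : ∀ i, ∑ j, a i j ^ 2 ≤ 1 := by
    intro i
    refine le_trans (le_of_eq ?_) ((subBessel F hF hF1 (E i)).trans (hE1 i))
    refine Finset.sum_congr rfl fun j _ => ?_
    rw [real_inner_comm]
  have hb2 : ∀ j, ∑ i, a i j ^ 2 ≤ 1 := fun j => (subBessel E hE hE1 (F j)).trans (hF1 j)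
  have k1 : ∑ i, ∑ j, σ i ^ 2 * a i j ^ 2 ≤ ∑ i, σ i ^ 2 := by
    refine Finset.sum_le_sum fun i _ => ?_
    rw [← Finset.mul_sum]
    nlinarith [hb1 i, sq_nonneg (σ i)]
  have k2 : ∑ i, ∑ j, τ j ^ 2 * a i j ^ 2 ≤ ∑ j, τ j ^ 2 := by
    rw [Finset.sum_comm]
    refine Finset.sum_le_sum fun i _ => ?_
    rw [← Finset.mul_sum]
    nlinarith [hb2 i, sq_nonneg (τ i)]
  have k3 : 4 * ∑ i, ∑ j, σ i * τ j * a i j * c i j ≤ 2 * ∑ i, ∑ j, σ i * τ j * c i j ^ 2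
      + (∑ i, ∑ j, σ i ^ 2 * a i j ^ 2 + ∑ i, ∑ j, τ j ^ 2 * a i j ^ 2) := by
    simp only [Finset.mul_sum, ← Finset.sum_add_distrib]
    refine Finset.sum_le_sum fun i _ => Finset.sum_le_sum fun j _ => ?_
    nlinarith [mul_nonneg (mul_nonneg (σ0 i) (τ0 j)) (sq_nonneg (a i j - c i j)),
      sq_nonneg ((σ i - τ j) * a i j)]
  have f1 : frobNorm (S - T) ^ 2 = ∑ k, ∑ l, S k l ^ 2 + ∑ k, ∑ l, T k l ^ 2
      - 2 * ∑ k, ∑ l, S k l * T k l := by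
    rw [frob_sq]
    simp only [Finset.mul_sum, ← Finset.sum_add_distrib, ← Finset.sum_sub_distrib]
    refine Finset.sum_congr rfl fun i _ => Finset.sum_congr rfl fun j _ => ?_
    rw [Matrix.sub_apply]; ring
  have f2 : ∑ i, ‖g i - h i‖ ^ 2 = ∑ k, inner ℝ (g k) (g k) + ∑ k, inner ℝ (h k) (h k)
      - 2 * ∑ k, inner ℝ (g k) (h k) := by
    simp only [Finset.mul_sum, ← Finset.sum_add_distrib, ← Finset.sum_sub_distrib]
    refine Finset.sum_congr rfl fun i _ => ?_
    rw [norm_sub_sq_real, real_inner_self_eq_norm_sq, real_inner_self_eq_norm_sq]; ring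
  rw [f1, f2, sS, sT, hST, hN]
  linarith

/-- centred and normalised vector -/
def gv (a b : H) : H := ‖a‖⁻¹ • (b - ((‖a‖ ^ 2)⁻¹ * inner ℝ a b) • a)

lemma gv_eq (a b : H) : gv a b = (‖a‖⁻¹ • b) -
    (inner ℝ (‖a‖⁻¹ • a) (‖a‖⁻¹ • b) : ℝ) • (‖a‖⁻¹ • a) := by
  unfold gv
  rw [smul_sub, inner_smul_left, inner_smul_right, smul_smul, smul_smul]
  congr 2
  simp only [conj_trivial]
  ring

lemma gv_norm_le (a b : H) (ha : a ≠ 0) : ‖gv a b‖ ^ 2 ≤ (‖a‖⁻¹ * ‖b‖) ^ 2 := by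
  have hn : ‖a‖ ≠ 0 := norm_ne_zero_iff.2 ha
  rw [gv_eq]
  set e := ‖a‖⁻¹ • a with he
  set b' := ‖a‖⁻¹ • b with hb
  have h1 : ‖e‖ = 1 := by rw [he, norm_smul, norm_inv, norm_norm, inv_mul_cancel₀ hn]
  have h2 : ‖b'‖ = ‖a‖⁻¹ * ‖b‖ := by rw [hb, norm_smul, norm_inv, norm_norm]
  rw [← h2]
  clear_value e b'
  rw [norm_sub_sq_real, inner_smul_right, norm_smul, h1, real_inner_comm e b']
  rw [Real.norm_eq_abs, mul_one, sq_abs]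
  nlinarith [sq_nonneg (inner ℝ e b' : ℝ)]

lemma gv_lip (a₁ a₂ b₁ b₂ : H) (z D δ : ℝ) (hz : 0 < z) (hD : 0 ≤ D) 
    (h1 : z ≤ ‖a₁‖) (h2 : z ≤ ‖a₂‖) (hb1 : ‖b₁‖ ≤ D)
    (ha : ‖a₁ - a₂‖ ≤ δ) (hb : ‖b₁ - b₂‖ ≤ δ) :
    ‖gv a₁ b₁ - gv a₂ b₂‖ ≤ (2 * (z⁻¹ + z⁻¹ ^ 2 * D) + 4 * z⁻¹ ^ 2 * D) * δ := by
  have key : ∀ c : H, ∀ D', ‖c‖ ≤ D' → ‖‖a₁‖⁻¹ • c - ‖a₂‖⁻¹ • c‖ ≤ ‖a₁‖⁻¹ * z⁻¹ * δ * D' := by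
    intro c D' hc
    have n1 : 0 < ‖a₁‖ := hz.trans_le h1
    have n2 : 0 < ‖a₂‖ := hz.trans_le h2
    rw [← sub_smul, norm_smul]
    have : ‖‖a₁‖⁻¹ - ‖a₂‖⁻¹‖ ≤ ‖a₁‖⁻¹ * z⁻¹ * δ := by
      have e : ‖a₁‖⁻¹ - ‖a₂‖⁻¹ = ‖a₁‖⁻¹ * ‖a₂‖⁻¹ * (‖a₂‖ - ‖a₁‖) := by field_simp
      rw [e, norm_mul, norm_mul, norm_inv, norm_inv, norm_norm, norm_norm]
      have : ‖‖a₂‖ - ‖a₁‖‖ ≤ δ := by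
        rw [Real.norm_eq_abs, abs_sub_comm]
        exact (abs_norm_sub_norm_le _ _).trans ha
      gcongr
    have h0 : 0 ≤ ‖a₁‖⁻¹ * z⁻¹ * δ := (norm_nonneg _).trans this
    gcongr
  have n1 : 0 < ‖a₁‖ := hz.trans_le h1
  have n2 : 0 < ‖a₂‖ := hz.trans_le h2
  have hδ : 0 ≤ δ := (norm_nonneg _).trans ha
  have hi1 : ‖a₁‖⁻¹ ≤ z⁻¹ := inv_anti₀ hz h1
  have hi2 : ‖a₂‖⁻¹ ≤ z⁻¹ := inv_anti₀ hz h2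
  have hz' : 0 < z⁻¹ := inv_pos.2 hz
  rw [gv_eq, gv_eq]
  have he : ‖‖a₁‖⁻¹ • a₁ - ‖a₂‖⁻¹ • a₂‖ ≤ 2 * z⁻¹ * δ := by
    have e : ‖a₁‖⁻¹ • a₁ - ‖a₂‖⁻¹ • a₂ = (‖a₁‖⁻¹ • a₁ - ‖a₂‖⁻¹ • a₁) + ‖a₂‖⁻¹ • (a₁ - a₂) := by
      rw [smul_sub]; abel
    rw [e]
    refine (norm_add_le _ _).trans ?_
    have k1 := key a₁ _ le_rfl
    have k2 : ‖‖a₂‖⁻¹ • (a₁ - a₂)‖ ≤ z⁻¹ * δ := by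
      rw [norm_smul, norm_inv, norm_norm]; gcongr
    have : ‖a₁‖⁻¹ * z⁻¹ * δ * ‖a₁‖ = z⁻¹ * δ := by field_simp
    linarith
  have hbb : ‖‖a₁‖⁻¹ • b₁ - ‖a₂‖⁻¹ • b₂‖ ≤ (z⁻¹ + z⁻¹ ^ 2 * D) * δ := by
    have e : ‖a₁‖⁻¹ • b₁ - ‖a₂‖⁻¹ • b₂ = (‖a₁‖⁻¹ • b₁ - ‖a₂‖⁻¹ • b₁) + ‖a₂‖⁻¹ • (b₁ - b₂) := by
      rw [smul_sub]; abel
    rw [e]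
    refine (norm_add_le _ _).trans ?_
    have k1 := key b₁ _ hb1
    have k2 : ‖‖a₂‖⁻¹ • (b₁ - b₂)‖ ≤ z⁻¹ * δ := by
      rw [norm_smul, norm_inv, norm_norm]; gcongr
    have : ‖a₁‖⁻¹ * z⁻¹ * δ * D ≤ z⁻¹ * z⁻¹ * δ * D := by gcongr
    nlinarith
  have ne1 : ‖‖a₁‖⁻¹ • a₁‖ = 1 := by
    rw [norm_smul, norm_inv, norm_norm, inv_mul_cancel₀ n1.ne']
  have ne2 : ‖‖a₂‖⁻¹ • a₂‖ = 1 := by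
    rw [norm_smul, norm_inv, norm_norm, inv_mul_cancel₀ n2.ne']
  have nb1 : ‖‖a₁‖⁻¹ • b₁‖ ≤ z⁻¹ * D := by
    rw [norm_smul, norm_inv, norm_norm]; gcongr
  generalize ‖a₁‖⁻¹ • a₁ = e₁ at *
  generalize ‖a₂‖⁻¹ • a₂ = e₂ at *
  generalize ‖a₁‖⁻¹ • b₁ = c₁ at *
  generalize ‖a₂‖⁻¹ • b₂ = c₂ at *
  have e : c₁ - (inner ℝ e₁ c₁ : ℝ) • e₁ - (c₂ - (inner ℝ e₂ c₂ : ℝ) • e₂) =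
      (c₁ - c₂) - ((inner ℝ e₁ c₁ : ℝ) • (e₁ - e₂) + (inner ℝ (e₁ - e₂) c₁ : ℝ) • e₂
        + (inner ℝ e₂ (c₁ - c₂) : ℝ) • e₂) := by
    rw [inner_sub_left, inner_sub_right, smul_sub, sub_smul, sub_smul]; abel
  rw [e]
  have t1 : ‖(inner ℝ e₁ c₁ : ℝ) • (e₁ - e₂)‖ ≤ (z⁻¹ * D) * (2 * z⁻¹ * δ) := by
    rw [norm_smul]
    have := norm_inner_le_norm (𝕜 := ℝ) e₁ c₁
    rw [ne1, one_mul] at this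
    gcongr
    exact this.trans nb1
  have t2 : ‖(inner ℝ (e₁ - e₂) c₁ : ℝ) • e₂‖ ≤ (2 * z⁻¹ * δ) * (z⁻¹ * D) := by
    rw [norm_smul, ne2, mul_one]
    refine (norm_inner_le_norm (𝕜 := ℝ) _ _).trans ?_
    gcongr
  have t3 : ‖(inner ℝ e₂ (c₁ - c₂) : ℝ) • e₂‖ ≤ (z⁻¹ + z⁻¹ ^ 2 * D) * δ := by
    rw [norm_smul, ne2, mul_one]
    refine (norm_inner_le_norm (𝕜 := ℝ) _ _).trans ?_
    rwa [ne2, one_mul]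
  refine (norm_sub_le _ _).trans ?_
  have t4 := norm_add₃_le (a := (inner ℝ e₁ c₁ : ℝ) • (e₁ - e₂))
    (b := (inner ℝ (e₁ - e₂) c₁ : ℝ) • e₂) (c := (inner ℝ e₂ (c₁ - c₂) : ℝ) • e₂)
  nlinarith

end Hilb

section Fn

/-- square root of the weight -/
def vFn (β : ℝ) {d : ℕ} (f : Rd d → ℝ) (x : Rd d) : ℝ := Real.exp (-β * f x / 2)

lemma vFn_sq (β : ℝ) {d : ℕ} (f : Rd d → ℝ) (x : Rd d) : vFn β f x * vFn β f x = wFn β f x := by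
  unfold vFn wFn
  rw [← Real.exp_add]; ring_nf

lemma vFn_pos (β : ℝ) {d : ℕ} (f : Rd d → ℝ) (x : Rd d) : 0 < vFn β f x := Real.exp_pos _

lemma wFn_pos (β : ℝ) {d : ℕ} (f : Rd d → ℝ) (x : Rd d) : 0 < wFn β f x := Real.exp_pos _

variable {β : ℝ} {d : ℕ} {s ℓ : ℝ} {f : Rd d → ℝ}

lemma classA_cont (hs : 0 ≤ s) (hf : ClassA s ℓ ℓ f) : Continuous f := by
  obtain ⟨L, hL, h⟩ := hf.lip
  rw [continuous_iff_continuousAt]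
  intro x
  rw [ContinuousAt, tendsto_iff_dist_tendsto_zero]
  have hc : Continuous fun y : Rd d => L * (1 + ‖y‖ + ‖x‖) ^ s * ‖y - x‖ := by
    refine (continuous_const.mul (Continuous.rpow_const (by fun_prop) fun _ => Or.inr hs)).mul
      (by fun_prop)
  have h0 : Filter.Tendsto (fun y : Rd d => L * (1 + ‖y‖ + ‖x‖) ^ s * ‖y - x‖) (nhds x)
      (nhds 0) := by
    have := hc.tendsto x
    simpa using this
  exact squeeze_zero (fun _ => dist_nonneg) (fun y => by rw [Real.dist_eq]; exact h y x) h0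

lemma fStar_le (hf : ClassA s ℓ ℓ f) (x : Rd d) : fStar f ≤ f x :=
  csInf_le hf.bddBelow ⟨x, rfl⟩

lemma vFn_le (hβ : 0 < β) (hf : ClassA s ℓ ℓ f) (x : Rd d) :
    vFn β f x ≤ Real.exp (-β * fStar f / 2) := by
  unfold vFn
  have := fStar_le hf x
  apply Real.exp_le_exp.2
  nlinarith

/-- growth comparison of the weight -/
lemma weight_growth (hβ : 0 < β) (hℓ : 0 ≤ ℓ) (hf : ClassA s ℓ ℓ f) :
    ∃ a > 0, ∃ C0 > 0, ∃ m : ℝ → ℝ, (∀ T, 0 < m T) ∧ ∀ T > 0,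
      (∀ x : Rd d, ‖x‖ ≤ 2 * T → m T ≤ wFn β f x) ∧
      (∀ x : Rd d, a * T ≤ ‖x‖ → wFn β f x ≤ C0 * m T) := by
  obtain ⟨cl, hcl, Cl, hCl, hl⟩ := hf.growth_lower
  obtain ⟨cu, hcu, Cu, hCu, hu⟩ := hf.growth_upper
  have hq : 0 < cu / cl + 1 := by positivity
  refine ⟨2 * (cu / cl + 1) ^ (1 / ℓ), by positivity, Real.exp (β * (Cl + Cu + cu)),
    Real.exp_pos _, fun T => Real.exp (-β * (fStar f + cu * (2 * T) ^ ℓ + Cu)),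
    fun _ => Real.exp_pos _, fun T hT => ⟨fun x hx => ?_, fun x hx => ?_⟩⟩
  · apply Real.exp_le_exp.2
    have h1 := hu x
    have h2 : ‖x‖ ^ ℓ ≤ (2 * T) ^ ℓ := Real.rpow_le_rpow (norm_nonneg _) hx hℓ
    have h3 : cu * ‖x‖ ^ ℓ ≤ cu * (2 * T) ^ ℓ := by gcongr
    nlinarith
  · unfold wFn
    rw [← Real.exp_add]
    apply Real.exp_le_exp.2
    have h1 := hl x
    have key : cu * (2 * T) ^ ℓ ≤ cl * ‖x‖ ^ ℓ + cu := by
      rcases hℓ.eq_or_lt with h | h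
      · subst h
        simp only [Real.rpow_zero]; linarith
      · have h2 : (2 * (cu / cl + 1) ^ (1 / ℓ) * T) ^ ℓ ≤ ‖x‖ ^ ℓ :=
          Real.rpow_le_rpow (by positivity) hx hℓ
        have h3 : (2 * (cu / cl + 1) ^ (1 / ℓ) * T) ^ ℓ = (2 * T) ^ ℓ * (cu / cl + 1) := by
          rw [show 2 * (cu / cl + 1) ^ (1 / ℓ) * T = (2 * T) * (cu / cl + 1) ^ (1 / ℓ) by ring,
            Real.mul_rpow (by positivity) (by positivity), ← Real.rpow_mul hq.le,
            one_div_mul_cancel h.ne', Real.rpow_one]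
        rw [h3] at h2
        have h4 : cl * ((2 * T) ^ ℓ * (cu / cl + 1)) ≤ cl * ‖x‖ ^ ℓ := by gcongr
        have h5 : cl * ((2 * T) ^ ℓ * (cu / cl + 1)) = cu * (2 * T) ^ ℓ + cl * (2 * T) ^ ℓ := by
          field_simp
        have h6 : 0 ≤ cl * (2 * T) ^ ℓ := by positivity
        linarith
    nlinarith

lemma rpow_exp_bdd (b ℓ k : ℝ) (hb : 0 < b) (hℓ : 0 < ℓ) (hk : 0 ≤ k) :
    ∃ D > 0, ∀ t : ℝ, 0 ≤ t → (1 + t) ^ k * Real.exp (-(b * t ^ ℓ)) ≤ D := by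
  obtain ⟨n, hn⟩ := exists_nat_ge (k / ℓ)
  have hn' : k ≤ ℓ * n := by rw [div_le_iff₀ hℓ] at hn; linarith
  refine ⟨2 ^ k * (1 + n.factorial / b ^ n), by positivity, fun t ht => ?_⟩
  rcases le_total t 1 with h | h
  · have h1 : (1 + t) ^ k ≤ 2 ^ k := Real.rpow_le_rpow (by linarith) (by linarith) hk
    have h2 : Real.exp (-(b * t ^ ℓ)) ≤ 1 := Real.exp_le_one_iff.2 (by
      have : 0 ≤ b * t ^ ℓ := by positivity
      linarith)
    have h3 : 0 ≤ (n.factorial : ℝ) / b ^ n := by positivity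
    have : (1 + t) ^ k * Real.exp (-(b * t ^ ℓ)) ≤ 2 ^ k * 1 := by gcongr
    refine this.trans ?_
    gcongr; linarith
  · have h1 : (1 + t) ^ k ≤ (2 * t) ^ k := Real.rpow_le_rpow (by linarith) (by linarith) hk
    rw [Real.mul_rpow (by norm_num) ht] at h1
    have h2 : t ^ k ≤ t ^ (ℓ * n) := Real.rpow_le_rpow_of_exponent_le h hn'
    rw [Real.rpow_mul ht, Real.rpow_natCast] at h2
    have h3 := Real.pow_div_factorial_le_exp (x := b * t ^ ℓ) (by positivity) n
    have h4 : (t ^ ℓ) ^ n ≤ n.factorial / b ^ n * Real.exp (b * t ^ ℓ) := by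
      rw [mul_pow, div_le_iff₀ (by positivity)] at h3
      rw [div_mul_eq_mul_div, le_div_iff₀ (by positivity)]
      linarith
    rw [Real.exp_neg, ← div_eq_mul_inv, div_le_iff₀ (Real.exp_pos _)]
    calc (1 + t) ^ k ≤ 2 ^ k * (n.factorial / b ^ n * Real.exp (b * t ^ ℓ)) :=
          h1.trans (by gcongr; exact h2.trans h4)
      _ ≤ 2 ^ k * ((1 + n.factorial / b ^ n) * Real.exp (b * t ^ ℓ)) := by gcongr; linarith
      _ = _ := by ring

lemma exp_diff (a b : ℝ) (h : b ≤ a) : |Real.exp a - Real.exp b| ≤ Real.exp a * |a - b| := by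
  have h1 : Real.exp b ≤ Real.exp a := Real.exp_le_exp.2 h
  rw [abs_of_nonneg (by linarith), abs_of_nonneg (by linarith)]
  have h2 := Real.add_one_le_exp (b - a)
  have h3 : Real.exp b = Real.exp a * Real.exp (b - a) := by rw [← Real.exp_add]; ring_nf
  rw [h3]
  nlinarith [Real.exp_pos a]

lemma vFn_diff (hβ : 0 < β) {L : ℝ}
    (h : ∀ x y : Rd d, |f x - f y| ≤ L * (1 + ‖x‖ + ‖y‖) ^ s * ‖x - y‖)
    (x y : Rd d) (hxy : vFn β f y ≤ vFn β f x) :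
    |vFn β f x - vFn β f y| ≤ vFn β f x * (β / 2 * (L * (1 + ‖x‖ + ‖y‖) ^ s * ‖x - y‖)) := by
  have h1 := exp_diff _ _ (Real.exp_le_exp.1 hxy)
  have h2 : |-β * f x / 2 - -β * f y / 2| = β / 2 * |f x - f y| := by
    rw [show -β * f x / 2 - -β * f y / 2 = -(β / 2 * (f x - f y)) by ring, abs_neg, abs_mul,
      abs_of_pos (by positivity)]
  rw [h2] at h1
  refine h1.trans ?_
  have := h x y
  have h3 := vFn_pos β f x
  unfold vFn at *
  gcongr

lemma smul_diff (x y : Rd d) :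
    ‖vFn β f x • x - vFn β f y • y‖ ≤
      vFn β f x * ‖x - y‖ + |vFn β f x - vFn β f y| * ‖y‖ := by
  have : vFn β f x • x - vFn β f y • y =
      vFn β f x • (x - y) + (vFn β f x - vFn β f y) • y := by
    rw [smul_sub, sub_smul]; abel
  rw [this]
  refine (norm_add_le _ _).trans (le_of_eq ?_)
  rw [norm_smul, norm_smul, Real.norm_eq_abs, Real.norm_eq_abs, abs_of_pos (vFn_pos β f x)]

lemma lip_aux (hβ : 0 < β) (hs : 0 ≤ s) (hℓ : 0 ≤ ℓ) (hf : ClassA s ℓ ℓ f) :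
    ∃ C > 0, ∀ x y : Rd d, vFn β f y ≤ vFn β f x →
      |vFn β f x - vFn β f y| ≤ C * (1 + ‖x‖ + ‖y‖) ^ (pM s ℓ - 1) * ‖x - y‖ ∧
      ‖vFn β f x • x - vFn β f y • y‖ ≤ C * (1 + ‖x‖ + ‖y‖) ^ (pM s ℓ - 1) * ‖x - y‖ := by
  obtain ⟨L, hL, h⟩ := hf.lip
  set B := Real.exp (-β * fStar f / 2) with hB
  have hB0 : 0 < B := Real.exp_pos _
  have hvB : ∀ x, vFn β f x ≤ B := vFn_le hβ hf
  rcases hℓ.eq_or_lt with h0 | h0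
  · have hpM : pM s ℓ - 1 = s + 1 := by simp [pM, ← h0]; ring
    rw [hpM]
    refine ⟨B * (β / 2 * L) + B, by positivity, fun x y hxy => ?_⟩
    have d1 := vFn_diff hβ h x y hxy
    have hN : 1 ≤ 1 + ‖x‖ + ‖y‖ := by linarith [norm_nonneg x, norm_nonneg y]
    have hy : ‖y‖ ≤ 1 + ‖x‖ + ‖y‖ := by linarith [norm_nonneg x, norm_nonneg y]
    generalize hNN : 1 + ‖x‖ + ‖y‖ = N at *
    have hN0 : 0 < N := by linarith
    have e1 : N ^ (s + 1) = N ^ s * N := by rw [Real.rpow_add hN0, Real.rpow_one]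
    have e2 : 1 ≤ N ^ (s + 1) := Real.one_le_rpow hN (by linarith)
    have hδ := norm_nonneg (x - y)
    have d2 : |vFn β f x - vFn β f y| ≤ B * (β / 2 * (L * N ^ s * ‖x - y‖)) :=
      d1.trans (by gcongr; exact hvB x)
    have d3 : |vFn β f x - vFn β f y| * N ≤ B * (β / 2 * L) * N ^ (s + 1) * ‖x - y‖ := by
      calc _ ≤ B * (β / 2 * (L * N ^ s * ‖x - y‖)) * N := by gcongr
        _ = _ := by rw [e1]; ring
    constructor
    · have : |vFn β f x - vFn β f y| ≤ |vFn β f x - vFn β f y| * N :=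
        le_mul_of_one_le_right (abs_nonneg _) hN
      have h5 : 0 ≤ B * N ^ (s + 1) * ‖x - y‖ := by positivity
      nlinarith
    · refine (smul_diff x y).trans ?_
      have h5 : vFn β f x * ‖x - y‖ ≤ B * N ^ (s + 1) * ‖x - y‖ := by
        gcongr
        nlinarith [hvB x]
      have h6 : |vFn β f x - vFn β f y| * ‖y‖ ≤ |vFn β f x - vFn β f y| * N := by gcongr
      nlinarith
  · have hpM : pM s ℓ - 1 = 0 := by simp [pM, h0.ne']
    rw [hpM]
    simp only [Real.rpow_zero, mul_one]
    obtain ⟨cl, hcl, Cl, hCl, hl⟩ := hf.growth_lower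
    obtain ⟨D0, hD0, hD⟩ := rpow_exp_bdd (β * cl / 2) ℓ (s + 1) (by positivity) h0 (by linarith)
    set D := B * Real.exp (β * Cl / 2) * D0 with hDdef
    have hDpos : 0 < D := by positivity
    have hvD : ∀ x : Rd d, vFn β f x * (1 + ‖x‖) ^ (s + 1) ≤ D := by
      intro x
      have h1 : vFn β f x ≤ B * Real.exp (β * Cl / 2) * Real.exp (-(β * cl / 2 * ‖x‖ ^ ℓ)) := by
        rw [hB, ← Real.exp_add, ← Real.exp_add]
        apply Real.exp_le_exp.2
        have := hl x
        nlinarith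
      calc _ ≤ B * Real.exp (β * Cl / 2) * Real.exp (-(β * cl / 2 * ‖x‖ ^ ℓ))
            * (1 + ‖x‖) ^ (s + 1) := by gcongr
        _ = B * Real.exp (β * Cl / 2) * ((1 + ‖x‖) ^ (s + 1) *
            Real.exp (-(β * cl / 2 * ‖x‖ ^ ℓ))) := by ring
        _ ≤ _ := by rw [hDdef]; gcongr; exact hD _ (norm_nonneg x)
    have hone : ∀ x : Rd d, 1 ≤ 1 + ‖x‖ := fun x => by linarith [norm_nonneg x]
    have hvx : ∀ x : Rd d, ‖vFn β f x • x‖ ≤ D := by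
      intro x
      rw [norm_smul, Real.norm_eq_abs, abs_of_pos (vFn_pos _ _ _)]
      refine le_trans ?_ (hvD x)
      have := vFn_pos β f x
      gcongr
      calc ‖x‖ ≤ 1 + ‖x‖ := by linarith
        _ = (1 + ‖x‖) ^ (1 : ℝ) := (Real.rpow_one _).symm
        _ ≤ _ := Real.rpow_le_rpow_of_exponent_le (hone x) (by linarith)
    refine ⟨B + 2 * D + β / 2 * L * 2 ^ s * D, by positivity, fun x y hxy => ?_⟩
    have hX : 0 < β / 2 * L * 2 ^ s * D := by positivity
    rcases le_or_gt ‖x - y‖ 1 with hle | hgt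
    · have d1 := vFn_diff hβ h x y hxy
      have hy : ‖y‖ ≤ 1 + ‖x‖ := by
        have := norm_sub_norm_le y x
        rw [norm_sub_rev] at this
        linarith
      have hN : (1 + ‖x‖ + ‖y‖) ^ s ≤ 2 ^ s * (1 + ‖x‖) ^ s := by
        rw [← Real.mul_rpow (by norm_num) (by positivity)]
        exact Real.rpow_le_rpow (by positivity) (by linarith) hs
      have hv := vFn_pos β f x
      have hδ := norm_nonneg (x - y)
      have d2 : |vFn β f x - vFn β f y| * (1 + ‖x‖) ≤ β / 2 * L * 2 ^ s * D * ‖x - y‖ := by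
        calc _ ≤ vFn β f x * (β / 2 * (L * (2 ^ s * (1 + ‖x‖) ^ s) * ‖x - y‖)) * (1 + ‖x‖) := by
              gcongr
              refine d1.trans ?_
              gcongr
          _ = β / 2 * L * 2 ^ s * (vFn β f x * (1 + ‖x‖) ^ (s + 1)) * ‖x - y‖ := by
              rw [Real.rpow_add (by positivity), Real.rpow_one]; ring
          _ ≤ _ := by gcongr; exact hvD x
      constructor
      · have : |vFn β f x - vFn β f y| ≤ |vFn β f x - vFn β f y| * (1 + ‖x‖) :=
          le_mul_of_one_le_right (abs_nonneg _) (hone x)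
        nlinarith
      · refine (smul_diff x y).trans ?_
        have h5 : vFn β f x * ‖x - y‖ ≤ B * ‖x - y‖ := by gcongr; exact hvB x
        have h6 : |vFn β f x - vFn β f y| * ‖y‖ ≤ |vFn β f x - vFn β f y| * (1 + ‖x‖) := by gcongr
        nlinarith
    · constructor
      · have : |vFn β f x - vFn β f y| ≤ B := by
          rw [abs_of_nonneg (by linarith)]
          linarith [hvB x, vFn_pos β f y]
        nlinarith
      · have := norm_sub_le (vFn β f x • x) (vFn β f y • y)
        have h1 := hvx x
        have h2 := hvx y
        nlinarith

lemma lip_main (hβ : 0 < β) (hs : 0 ≤ s) (hℓ : 0 ≤ ℓ) (hf : ClassA s ℓ ℓ f)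
    {p : ℝ} (hp : 2 * pM s ℓ ≤ p) :
    ∃ C > 0, ∀ x y : Rd d,
      |vFn β f x - vFn β f y| ≤ C * ((1 + ‖x‖ + ‖y‖) ^ ((p - 2) / 2) * ‖x - y‖) ∧
      ‖vFn β f x • x - vFn β f y • y‖ ≤ C * ((1 + ‖x‖ + ‖y‖) ^ ((p - 2) / 2) * ‖x - y‖) := by
  obtain ⟨C, hC, h⟩ := lip_aux hβ hs hℓ hf
  refine ⟨C, hC, fun x y => ?_⟩
  have hN : (1 + ‖x‖ + ‖y‖) ^ (pM s ℓ - 1) ≤ (1 + ‖x‖ + ‖y‖) ^ ((p - 2) / 2) :=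
    Real.rpow_le_rpow_of_exponent_le (by linarith [norm_nonneg x, norm_nonneg y]) (by linarith)
  have hm : C * (1 + ‖x‖ + ‖y‖) ^ (pM s ℓ - 1) * ‖x - y‖ ≤
      C * ((1 + ‖x‖ + ‖y‖) ^ ((p - 2) / 2) * ‖x - y‖) := by
    rw [mul_assoc]; gcongr
  rcases le_total (vFn β f y) (vFn β f x) with hxy | hxy
  · exact ⟨(h x y hxy).1.trans hm, (h x y hxy).2.trans hm⟩
  · have := h y x hxy
    rw [abs_sub_comm, norm_sub_rev y x, norm_sub_rev (vFn β f y • y),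
      show 1 + ‖y‖ + ‖x‖ = 1 + ‖x‖ + ‖y‖ by ring] at this
    exact ⟨this.1.trans hm, this.2.trans hm⟩

end Fn

section Meas

variable {β : ℝ} {d : ℕ} {s ℓ : ℝ} {f : Rd d → ℝ} {Ω : Type*} [MeasurableSpace Ω]
  {π : Measure Ω} [IsProbabilityMeasure π] {X : Ω → Rd d}

lemma vFn_cont (β : ℝ) (hf : Continuous f) : Continuous (vFn β f) := by
  unfold vFn; fun_prop

lemma wFn_cont (β : ℝ) (hf : Continuous f) : Continuous (wFn β f) := by
  unfold wFn; fun_prop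

lemma memv {B : ℝ} (hf : Continuous f) (hB : ∀ x, vFn β f x ≤ B) (hX : MemLp X 2 π) :
    MemLp (fun ω => vFn β f (X ω)) 2 π := by
  refine MemLp.of_bound ((vFn_cont β hf).comp_aestronglyMeasurable hX.1) B ?_
  refine Filter.Eventually.of_forall fun ω => ?_
  rw [Real.norm_eq_abs, abs_of_pos (vFn_pos _ _ _)]
  exact hB _

lemma memb {B : ℝ} (hf : Continuous f) (hB : ∀ x, vFn β f x ≤ B) (hX : MemLp X 2 π) (i : Fin d) :
    MemLp (fun ω => vFn β f (X ω) * X ω i) 2 π := by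
  have hc : Continuous fun x : Rd d => vFn β f x * x i := by
    have := vFn_cont β hf
    fun_prop
  refine MemLp.of_le_mul (c := B) hX (hc.comp_aestronglyMeasurable hX.1) ?_
  refine Filter.Eventually.of_forall fun ω => ?_
  rw [norm_mul, Real.norm_eq_abs, abs_of_pos (vFn_pos _ _ _)]
  have h1 := PiLp.norm_apply_le (X ω) i
  have h2 := vFn_pos β f (X ω)
  have := h2.le.trans (hB (X ω))
  gcongr
  exact hB _

lemma inner_toLp {u v : Ω → ℝ} (hu : MemLp u 2 π) (hv : MemLp v 2 π) :
    inner ℝ (hu.toLp u) (hv.toLp v) = ∫ ω, u ω * v ω ∂π := by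
  rw [L2.inner_def]
  refine integral_congr_ae ?_
  filter_upwards [hu.coeFn_toLp, hv.coeFn_toLp] with ω h1 h2
  rw [h1, h2]
  simp [mul_comm]

lemma norm_sq_toLp {u : Ω → ℝ} (hu : MemLp u 2 π) :
    ‖hu.toLp u‖ ^ 2 = ∫ ω, u ω * u ω ∂π := by
  rw [← real_inner_self_eq_norm_sq, inner_toLp]

lemma gram_eq {B : ℝ} (hf : Continuous f) (hB : ∀ x, vFn β f x ≤ B) (hX : MemLp X 2 π)
    (hXm : Measurable X) (i j : Fin d) :
    wCov β f (π.map X) i j =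
      inner ℝ (gv ((memv hf hB hX).toLp _) ((memb hf hB hX i).toLp _))
        (gv ((memv hf hB hX).toLp _) ((memb hf hB hX j).toLp _)) := by
  have hZ : ∫ x, wFn β f x ∂(π.map X) = ‖(memv hf hB hX).toLp _‖ ^ 2 := by
    rw [integral_map hXm.aemeasurable (wFn_cont β hf).aestronglyMeasurable, norm_sq_toLp]
    simp only [vFn_sq]
  have hM : ∀ k, wMean β f (π.map X) k = (‖(memv hf hB hX).toLp _‖ ^ 2)⁻¹ *
      inner ℝ ((memv hf hB hX).toLp _) ((memb hf hB hX k).toLp _) := by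
    intro k
    unfold wMean
    have hc : Continuous fun x : Rd d => wFn β f x • x := by
      have := wFn_cont β hf
      fun_prop
    rw [hZ, PiLp.smul_apply, smul_eq_mul, inner_toLp,
      integral_map hXm.aemeasurable hc.aestronglyMeasurable, eval_integral_piLp]
    · congr 2
      ext ω
      rw [PiLp.smul_apply, smul_eq_mul, ← vFn_sq]; ring
    · intro k
      have := (memv hf hB hX).integrable_mul (memb hf hB hX k)
      refine this.congr (Filter.Eventually.of_forall fun ω => ?_)
      simp only [Pi.mul_apply, PiLp.smul_apply, smul_eq_mul, ← vFn_sq]; ring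
  have hg : ∀ k, gv ((memv hf hB hX).toLp _) ((memb hf hB hX k).toLp _) =
      ‖(memv hf hB hX).toLp _‖⁻¹ •
        ((memb hf hB hX k).sub ((memv hf hB hX).const_smul (wMean β f (π.map X) k))).toLp _ := by
    intro k
    unfold gv
    rw [← hM, MemLp.toLp_sub, MemLp.toLp_const_smul]
    exact (memv hf hB hX).const_smul _
  rw [hg, hg, inner_smul_left, inner_smul_right, inner_toLp]
  have hc : Continuous fun x : Rd d => wFn β f x *
      ((x i - wMean β f (π.map X) i) * (x j - wMean β f (π.map X) j)) := by
    have := wFn_cont β hf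
    fun_prop
  conv_lhs => unfold wCov
  rw [hZ, integral_map hXm.aemeasurable hc.aestronglyMeasurable]
  simp only [conj_trivial]
  rw [← mul_assoc, ← sq, inv_pow]
  congr 2
  ext ω
  simp only [Pi.sub_apply, Pi.smul_apply, smul_eq_mul, ← vFn_sq]
  ring

lemma conc {B : ℝ} (hf : Continuous f) (hB : ∀ x, vFn β f x ≤ B) (hX : MemLp X 2 π)
    {T a C0 m : ℝ} (hT : 0 < T) (hm : 0 < m) (hC0 : 0 < C0)
    (hX2 : eLpNorm X 2 π ≤ ENNReal.ofReal T)
    (hlow : ∀ x : Rd d, ‖x‖ ≤ 2 * T → m ≤ wFn β f x)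
    (hup : ∀ x : Rd d, a * T ≤ ‖x‖ → wFn β f x ≤ C0 * m) :
    3 / 4 * m ≤ ‖(memv hf hB hX).toLp _‖ ^ 2 ∧
    ∑ i, ‖(memb hf hB hX i).toLp _‖ ^ 2 ≤
      (a ^ 2 + 4 / 3 * C0) * T ^ 2 * ‖(memv hf hB hX).toLp _‖ ^ 2 := by
  have iX : Integrable (fun ω => ‖X ω‖ ^ 2) π := hX.integrable_norm_pow (by norm_num)
  have hX2' : ∫ ω, ‖X ω‖ ^ 2 ∂π ≤ T ^ 2 := by
    have h1 := hX.eLpNorm_eq_integral_rpow_norm (by norm_num) (by norm_num)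
    rw [h1] at hX2
    have h2 := (ENNReal.ofReal_le_ofReal_iff hT.le).1 hX2
    have h0 : 0 ≤ ∫ ω, ‖X ω‖ ^ 2 ∂π := integral_nonneg fun _ => by positivity
    norm_num at h2
    rw [← Real.sqrt_eq_rpow] at h2
    exact (Real.sqrt_le_left hT.le).1 h2
  have iw : Integrable (fun ω => wFn β f (X ω)) π := by
    have := (memv hf hB hX).integrable_mul (memv hf hB hX)
    exact this.congr (Filter.Eventually.of_forall fun ω => vFn_sq _ _ _)
  have hw : ‖(memv hf hB hX).toLp _‖ ^ 2 = ∫ ω, wFn β f (X ω) ∂π := by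
    rw [norm_sq_toLp]
    simp only [vFn_sq]
  have ib : ∀ i, Integrable (fun ω => (vFn β f (X ω) * X ω i) * (vFn β f (X ω) * X ω i)) π :=
    fun i => (memb hf hB hX i).integrable_mul (memb hf hB hX i)
  have hptw : ∀ ω, ∑ i, (vFn β f (X ω) * X ω i) * (vFn β f (X ω) * X ω i) =
      wFn β f (X ω) * ‖X ω‖ ^ 2 := by
    intro ω
    rw [EuclideanSpace.norm_sq_eq, Finset.mul_sum]
    refine Finset.sum_congr rfl fun i _ => ?_
    rw [← vFn_sq, Real.norm_eq_abs, sq_abs]; ring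
  have hb : ∑ i, ‖(memb hf hB hX i).toLp _‖ ^ 2 = ∫ ω, wFn β f (X ω) * ‖X ω‖ ^ 2 ∂π := by
    simp only [norm_sq_toLp]
    rw [← integral_finsetSum _ fun i _ => ib i]
    simp only [hptw]
  have iwX : Integrable (fun ω => wFn β f (X ω) * ‖X ω‖ ^ 2) π := by
    have := integrable_finsetSum Finset.univ fun i _ => ib i
    exact this.congr (Filter.Eventually.of_forall fun ω => hptw ω)
  have l1 : 3 / 4 * m ≤ ∫ ω, wFn β f (X ω) ∂π := by
    have h1 : ∫ ω, (m - m / (4 * T ^ 2) * ‖X ω‖ ^ 2) ∂π ≤ ∫ ω, wFn β f (X ω) ∂π := by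
      refine integral_mono ((integrable_const _).sub (iX.const_mul _)) iw fun ω => ?_
      simp only
      rcases le_or_gt ‖X ω‖ (2 * T) with h | h
      · have : 0 ≤ m / (4 * T ^ 2) * ‖X ω‖ ^ 2 := by positivity
        linarith [hlow _ h]
      · have h2 : (2 * T) ^ 2 ≤ ‖X ω‖ ^ 2 := by gcongr
        have h3 : m / (4 * T ^ 2) * (2 * T) ^ 2 ≤ m / (4 * T ^ 2) * ‖X ω‖ ^ 2 := by gcongr
        have h4 : m / (4 * T ^ 2) * (2 * T) ^ 2 = m := by field_simp; ring
        linarith [wFn_pos β f (X ω)]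
    rw [integral_sub (integrable_const _) (iX.const_mul _), integral_const_mul] at h1
    simp only [integral_const, probReal_univ, one_smul] at h1
    have h3 : m / (4 * T ^ 2) * ∫ ω, ‖X ω‖ ^ 2 ∂π ≤ m / (4 * T ^ 2) * T ^ 2 := by gcongr
    have h4 : m / (4 * T ^ 2) * T ^ 2 = m / 4 := by field_simp
    linarith
  rw [hw, hb]
  refine ⟨l1, ?_⟩
  have h1 : ∫ ω, wFn β f (X ω) * ‖X ω‖ ^ 2 ∂π ≤
      ∫ ω, ((a * T) ^ 2 * wFn β f (X ω) + C0 * m * ‖X ω‖ ^ 2) ∂π := by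
    refine integral_mono iwX ((iw.const_mul _).add (iX.const_mul _)) fun ω => ?_
    simp only
    have hwp := wFn_pos β f (X ω)
    rcases le_or_gt (a * T) ‖X ω‖ with h | h
    · have h2 : wFn β f (X ω) * ‖X ω‖ ^ 2 ≤ C0 * m * ‖X ω‖ ^ 2 := by
        gcongr
        exact hup _ h
      have h3 : 0 ≤ (a * T) ^ 2 * wFn β f (X ω) := by positivity
      linarith
    · have h2 : ‖X ω‖ ^ 2 ≤ (a * T) ^ 2 := by gcongr
      have h3 : wFn β f (X ω) * ‖X ω‖ ^ 2 ≤ wFn β f (X ω) * (a * T) ^ 2 := by gcongr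
      have h4 : 0 ≤ C0 * m * ‖X ω‖ ^ 2 := by positivity
      linarith
  rw [integral_add (iw.const_mul _) (iX.const_mul _), integral_const_mul, integral_const_mul] at h1
  have h2 : C0 * m * ∫ ω, ‖X ω‖ ^ 2 ∂π ≤ C0 * m * T ^ 2 := by gcongr
  have h3 : C0 * T ^ 2 * (3 / 4 * m) ≤ C0 * T ^ 2 * ∫ ω, wFn β f (X ω) ∂π := by gcongr
  nlinarith

lemma holder2 {p : ℝ} (hp : 2 ≤ p) {N D : Ω → ℝ} (hN : AEStronglyMeasurable N π)
    (hD : AEStronglyMeasurable D π) (hN0 : ∀ ω, 0 ≤ N ω) :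
    eLpNorm (fun ω => N ω ^ ((p - 2) / 2) * D ω) 2 π ≤
      eLpNorm N (ENNReal.ofReal p) π ^ ((p - 2) / 2) * eLpNorm D (ENNReal.ofReal p) π := by
  rcases hp.eq_or_lt with h | h
  · subst h
    simp
  · set q := (p - 2) / 2 with hq
    have hq0 : 0 < q := by rw [hq]; linarith
    have ht : ENNReal.HolderTriple (ENNReal.ofReal (p / q)) (ENNReal.ofReal p) 2 := by
      constructor
      rw [← ENNReal.ofReal_inv_of_pos (by positivity), ← ENNReal.ofReal_inv_of_pos (by positivity),
        ← ENNReal.ofReal_add (by positivity) (by positivity)]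
      rw [show (2 : ℝ≥0∞) = ENNReal.ofReal 2 by simp, ← ENNReal.ofReal_inv_of_pos (by positivity)]
      congr 1
      have : p ≠ 0 := by positivity
      field_simp
      rw [hq]; ring
    have hNq : AEStronglyMeasurable (fun ω => N ω ^ q) π :=
      (Real.continuous_rpow_const hq0.le).comp_aestronglyMeasurable hN
    have h1 := eLpNorm_smul_le_mul_eLpNorm (p := ENNReal.ofReal (p / q)) (q := ENNReal.ofReal p)
      (r := 2) hD hNq
    refine h1.trans (le_of_eq ?_)
    congr 1
    have h2 := eLpNorm_norm_rpow (p := ENNReal.ofReal (p / q)) (μ := π) N hq0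
    rw [← ENNReal.ofReal_mul (by positivity), div_mul_cancel₀ _ hq0.ne'] at h2
    rw [← h2]
    congr 1
    ext ω
    rw [Real.norm_of_nonneg (hN0 ω)]

end Meas

section Main

variable {β : ℝ} {d : ℕ} {s ℓ : ℝ} {f : Rd d → ℝ}

lemma norm_sub_toLp_le {Ω : Type*} [MeasurableSpace Ω] {π : Measure Ω} {u v : Ω → ℝ}
    (hu : MemLp u 2 π) (hv : MemLp v 2 π) {δ : ℝ} (hδ : 0 ≤ δ)
    (h : eLpNorm (u - v) 2 π ≤ ENNReal.ofReal δ) : ‖hu.toLp u - hv.toLp v‖ ≤ δ := by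
  rw [← MemLp.toLp_sub, Lp.norm_toLp]
  exact ENNReal.toReal_le_of_le_ofReal hδ h

set_option maxHeartbeats 1000000 in
lemma coupling_main (hβ : 0 < β) (hs : 0 ≤ s) (hℓ : 0 ≤ ℓ) (hf : ClassA s ℓ ℓ f)
    {R : ℝ} (hR : 0 < R) {p : ℝ} (hp : 2 * pM s ℓ ≤ p) (hp2 : 2 ≤ p) :
    ∃ L > 0, ∀ π : Measure (Rd d × Rd d), IsProbabilityMeasure π →
      eLpNorm (fun z : Rd d × Rd d => z.1) (ENNReal.ofReal p) π ≤ ENNReal.ofReal R →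
      ∀ c : ℝ, 0 ≤ c →
      eLpNorm (fun z : Rd d × Rd d => z.1 - z.2) (ENNReal.ofReal p) π ≤ ENNReal.ofReal c →
      ∀ Sμ Sν : Matrix (Fin d) (Fin d) ℝ,
        IsPSDSqrt Sμ (wCov β f (π.map Prod.fst)) → IsPSDSqrt Sν (wCov β f (π.map Prod.snd)) →
        frobNorm (Sμ - Sν) ≤ L * c := by
  have hfc := classA_cont hs hf
  obtain ⟨B, hB0, hB⟩ : ∃ B > 0, ∀ x, vFn β f x ≤ B := ⟨_, Real.exp_pos _, vFn_le hβ hf⟩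
  obtain ⟨a, ha, C0, hC0, m, hm, hgr⟩ := weight_growth hβ hℓ hf
  obtain ⟨C, hC, hlip⟩ := lip_main hβ hs hℓ hf hp
  set Λ := a ^ 2 + 4 / 3 * C0 with hΛ
  have hΛ0 : 0 < Λ := by positivity
  set z := Real.sqrt (3 / 4 * m (R + 1)) with hz
  have hz0 : 0 < z := Real.sqrt_pos.2 (by have := hm (R + 1); positivity)
  set D := B * (R + 1) with hD
  have hD0 : 0 < D := by positivity
  set K := (2 * (z⁻¹ + z⁻¹ ^ 2 * D) + 4 * z⁻¹ ^ 2 * D) with hK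
  have hK0 : 0 < K := by positivity
  set q := (p - 2) / 2 with hq
  have hq0 : 0 ≤ q := by rw [hq]; linarith
  set L1 := Real.sqrt (8 * Λ) * (R + 1) with hL1
  set L2 := Real.sqrt (2 * d) * (K * (C * (2 * R + 2) ^ q)) with hL2
  have hL10 : 0 ≤ L1 := by positivity
  have hL20 : 0 ≤ L2 := by positivity
  refine ⟨L1 + L2 + 1, by positivity, ?_⟩
  intro π hπ hR1 c hc hcd Sμ Sν hSμ hSν
  have h2p : (2 : ℝ≥0∞) ≤ ENNReal.ofReal p := by
    rw [show (2 : ℝ≥0∞) = ENNReal.ofReal 2 by simp]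
    exact ENNReal.ofReal_le_ofReal hp2
  have h1p : (1 : ℝ≥0∞) ≤ ENNReal.ofReal p := le_trans (by norm_num) h2p
  have m1 : AEStronglyMeasurable (fun z : Rd d × Rd d => z.1) π := by fun_prop
  have m2 : AEStronglyMeasurable (fun z : Rd d × Rd d => z.2) π := by fun_prop
  have m12 : AEStronglyMeasurable (fun z : Rd d × Rd d => z.1 - z.2) π := by fun_prop
  have hR2 : eLpNorm (fun z : Rd d × Rd d => z.2) (ENNReal.ofReal p) π
      ≤ ENNReal.ofReal (R + c) := by
    have e : (fun z : Rd d × Rd d => z.2) =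
        (fun z : Rd d × Rd d => z.1) - (fun z : Rd d × Rd d => z.1 - z.2) := by
      ext1 z; simp
    rw [e, ENNReal.ofReal_add hR.le hc]
    exact (eLpNorm_sub_le m1 m12 h1p).trans (add_le_add hR1 hcd)
  have n1 : eLpNorm (fun z : Rd d × Rd d => z.1) 2 π ≤ ENNReal.ofReal R :=
    (eLpNorm_le_eLpNorm_of_exponent_le h2p m1).trans hR1
  have n2 : eLpNorm (fun z : Rd d × Rd d => z.2) 2 π ≤ ENNReal.ofReal (R + c) :=
    (eLpNorm_le_eLpNorm_of_exponent_le h2p m2).trans hR2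
  have M1 : MemLp (fun z : Rd d × Rd d => z.1) 2 π := ⟨m1, n1.trans_lt ENNReal.ofReal_lt_top⟩
  have M2 : MemLp (fun z : Rd d × Rd d => z.2) 2 π := ⟨m2, n2.trans_lt ENNReal.ofReal_lt_top⟩
  have hG1 : ∀ i j, (Sμ * Sμ) i j = _ := fun i j => by
    rw [hSμ.2]; exact gram_eq hfc hB M1 measurable_fst i j
  have hG2 : ∀ i j, (Sν * Sν) i j = _ := fun i j => by
    rw [hSν.2]; exact gram_eq hfc hB M2 measurable_snd i j
  have hA := araki _ _ Sμ Sν hSμ.1 hG1 hSν.1 hG2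
  have conc1 : ∀ T > 0, ENNReal.ofReal R ≤ ENNReal.ofReal T → _ := fun T hT hRT =>
    conc hfc hB M1 hT (hm T) hC0 (n1.trans hRT) (hgr T hT).1 (hgr T hT).2
  have conc2 : ∀ T > 0, ENNReal.ofReal (R + c) ≤ ENNReal.ofReal T → _ := fun T hT hRT =>
    conc hfc hB M2 hT (hm T) hC0 (n2.trans hRT) (hgr T hT).1 (hgr T hT).2
  have mb1 := memb (β := β) hfc hB M1
  have mb2 := memb (β := β) hfc hB M2
  have mv1 := memv (β := β) hfc hB M1
  have mv2 := memv (β := β) hfc hB M2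
  have fin : ∀ L', 0 ≤ L' → L' ≤ L1 + L2 + 1 → frobNorm (Sμ - Sν) ^ 2 ≤ (L' * c) ^ 2 →
      frobNorm (Sμ - Sν) ≤ (L1 + L2 + 1) * c := by
    intro L' h0 h1 h2
    exact (le_of_sq_le_sq h2 (by positivity)).trans (by gcongr)
  rcases le_or_gt c 1 with hc1 | hc1
  · -- small distance
    refine fin L2 hL20 (by linarith) (hA.trans ?_)
    obtain ⟨c1, -⟩ := conc1 (R + 1) (by linarith) (ENNReal.ofReal_le_ofReal (by linarith))
    obtain ⟨c2, -⟩ := conc2 (R + 1) (by linarith) (ENNReal.ofReal_le_ofReal (by linarith))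
    have z1 : z ≤ ‖mv1.toLp _‖ := Real.sqrt_le_iff.2 ⟨norm_nonneg _, c1⟩
    have z2 : z ≤ ‖mv2.toLp _‖ := Real.sqrt_le_iff.2 ⟨norm_nonneg _, c2⟩
    have hN : eLpNorm (fun z : Rd d × Rd d => 1 + ‖z.1‖ + ‖z.2‖) (ENNReal.ofReal p) π ≤
        ENNReal.ofReal (2 * R + 2) := by
      have e : (fun z : Rd d × Rd d => 1 + ‖z.1‖ + ‖z.2‖) =
        ((fun z : Rd d × Rd d => (1 : ℝ)) + fun z => ‖z.1‖) + fun z => ‖z.2‖ := rfl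
      have k1 : eLpNorm (fun z : Rd d × Rd d => ‖z.1‖) (ENNReal.ofReal p) π ≤
        ENNReal.ofReal R := by rw [eLpNorm_norm]; exact hR1
      have k2 : eLpNorm (fun z : Rd d × Rd d => ‖z.2‖) (ENNReal.ofReal p) π ≤
        ENNReal.ofReal (R + 1) := by
        rw [eLpNorm_norm]; exact hR2.trans (ENNReal.ofReal_le_ofReal (by linarith))
      have k0 : eLpNorm (fun z : Rd d × Rd d => (1 : ℝ)) (ENNReal.ofReal p) π ≤
          ENNReal.ofReal 1 := by
        rw [eLpNorm_const _ (by positivity) (IsProbabilityMeasure.ne_zero π)]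
        simp
      rw [e, show 2 * R + 2 = (1 + R) + (R + 1) by ring,
        ENNReal.ofReal_add (by positivity) (by positivity),
        ENNReal.ofReal_add (by positivity) (by positivity)]
      refine (eLpNorm_add_le (by fun_prop) (by fun_prop) h1p).trans (add_le_add ?_ k2)
      exact (eLpNorm_add_le (by fun_prop) (by fun_prop) h1p).trans (add_le_add k0 k1)
    have hH : eLpNorm (fun z : Rd d × Rd d => (1 + ‖z.1‖ + ‖z.2‖) ^ q * ‖z.1 - z.2‖) 2 π ≤
        ENNReal.ofReal ((2 * R + 2) ^ q * c) := by
      refine (holder2 hp2 (by fun_prop) (by fun_prop) (fun z => by positivity)).trans ?_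
      rw [ENNReal.ofReal_mul (by positivity), ← ENNReal.ofReal_rpow_of_nonneg (by positivity) hq0]
      refine mul_le_mul' (ENNReal.rpow_le_rpow hN hq0) ?_
      rw [eLpNorm_norm]; exact hcd
    have hdiff : ∀ u : Rd d × Rd d → ℝ,
        (∀ z, |u z| ≤ C * ((1 + ‖z.1‖ + ‖z.2‖) ^ q * ‖z.1 - z.2‖)) →
        eLpNorm u 2 π ≤ ENNReal.ofReal (C * ((2 * R + 2) ^ q * c)) := by
      intro u hu
      rw [ENNReal.ofReal_mul hC.le]
      refine (eLpNorm_le_mul_eLpNorm_of_ae_le_mul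
        (g := fun z : Rd d × Rd d => (1 + ‖z.1‖ + ‖z.2‖) ^ q * ‖z.1 - z.2‖) (c := C)
        (Filter.Eventually.of_forall fun z => ?_) 2).trans (by gcongr)
      rw [Real.norm_eq_abs, Real.norm_of_nonneg (by positivity)]
      exact hu z
    have hδ0 : 0 ≤ C * ((2 * R + 2) ^ q * c) := by positivity
    have da : ‖mv1.toLp _ - mv2.toLp _‖ ≤ C * ((2 * R + 2) ^ q * c) :=
      norm_sub_toLp_le mv1 mv2 hδ0 (hdiff _ fun z => (hlip z.1 z.2).1)
    have db : ∀ i, ‖(mb1 i).toLp _ - (mb2 i).toLp _‖ ≤ C * ((2 * R + 2) ^ q * c) := fun i =>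
      norm_sub_toLp_le (mb1 i) (mb2 i) hδ0 (hdiff _ fun z => by
        refine le_trans ?_ (hlip z.1 z.2).2
        have := PiLp.norm_apply_le (vFn β f z.1 • z.1 - vFn β f z.2 • z.2) i
        simpa using this)
    have hbD : ∀ i, ‖(mb1 i).toLp _‖ ≤ D := by
      intro i
      rw [Lp.norm_toLp]
      refine ENNReal.toReal_le_of_le_ofReal hD0.le ?_
      rw [hD, ENNReal.ofReal_mul hB0.le]
      refine (eLpNorm_le_mul_eLpNorm_of_ae_le_mul
        (g := fun z : Rd d × Rd d => z.1) (c := B)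
        (Filter.Eventually.of_forall fun z => ?_) 2).trans ?_
      · rw [norm_mul, Real.norm_eq_abs, abs_of_pos (vFn_pos _ _ _)]
        have h1 := PiLp.norm_apply_le z.1 i
        gcongr
        exact hB _
      · gcongr
        exact n1.trans (ENNReal.ofReal_le_ofReal (by linarith))
    have hgl := fun i => gv_lip (mv1.toLp _) (mv2.toLp _) ((mb1 i).toLp _) ((mb2 i).toLp _)
      z D _ hz0 hD0.le z1 z2 (hbD i) da (db i)
    calc _ ≤ 2 * ∑ i : Fin d, (K * (C * ((2 * R + 2) ^ q * c))) ^ 2 := by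
          gcongr with i
          exact hgl i
      _ = (2 * d) * (K * (C * (2 * R + 2) ^ q) * c) ^ 2 := by
          simp only [Finset.sum_const, Finset.card_univ, Fintype.card_fin, nsmul_eq_mul]; ring
      _ = _ := by
          rw [hL2, mul_assoc (Real.sqrt _), mul_pow (Real.sqrt _), Real.sq_sqrt (by positivity)]
  · -- large distance
    refine fin L1 hL10 (by linarith) (hA.trans ?_)
    obtain ⟨c1, d1⟩ := conc1 R hR le_rfl
    obtain ⟨c2, d2⟩ := conc2 (R + c) (by linarith) le_rfl
    have big : ∀ (av : Lp ℝ 2 π) (b : Fin d → Lp ℝ 2 π) (T t : ℝ), 0 < t → t ≤ ‖av‖ ^ 2 →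
        ∑ i, ‖b i‖ ^ 2 ≤ Λ * T ^ 2 * ‖av‖ ^ 2 → ∑ i, ‖gv av (b i)‖ ^ 2 ≤ Λ * T ^ 2 := by
      intro av b T t ht h1 h2
      have hav : av ≠ 0 := by
        rintro rfl
        simp at h1; linarith
      have hn : 0 < ‖av‖ := norm_pos_iff.2 hav
      calc ∑ i, ‖gv av (b i)‖ ^ 2 ≤ ∑ i, (‖av‖⁻¹ * ‖b i‖) ^ 2 :=
            Finset.sum_le_sum fun i _ => gv_norm_le av (b i) hav
        _ = (‖av‖⁻¹) ^ 2 * ∑ i, ‖b i‖ ^ 2 := by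
            rw [Finset.mul_sum]; simp only [mul_pow]
        _ ≤ (‖av‖⁻¹) ^ 2 * (Λ * T ^ 2 * ‖av‖ ^ 2) := by gcongr
        _ = _ := by field_simp
    have b1 := big (mv1.toLp _) (fun i => (mb1 i).toLp _) R _
      (by have := hm R; positivity) c1 d1
    have b2 := big (mv2.toLp _) (fun i => (mb2 i).toLp _) (R + c) _
      (by have := hm (R + c); positivity) c2 d2
    have tri : ∀ x y : Lp ℝ 2 π, ‖x - y‖ ^ 2 ≤ 2 * ‖x‖ ^ 2 + 2 * ‖y‖ ^ 2 := by
      intro x y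
      have h1 : ‖x - y‖ ^ 2 ≤ (‖x‖ + ‖y‖) ^ 2 := by gcongr; exact norm_sub_le x y
      linarith [add_sq_le (a := ‖x‖) (b := ‖y‖)]
    calc _ ≤ 2 * (2 * (Λ * R ^ 2) + 2 * (Λ * (R + c) ^ 2)) := by
          gcongr
          refine (Finset.sum_le_sum fun i _ => tri _ _).trans ?_
          rw [Finset.sum_add_distrib, ← Finset.mul_sum, ← Finset.mul_sum]
          linarith
      _ ≤ 2 * (2 * (Λ * ((R + 1) * c) ^ 2) + 2 * (Λ * ((R + 1) * c) ^ 2)) := by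
          have g1 : R ≤ (R + 1) * c := by nlinarith only [hR, hc1]
          have g2 : R + c ≤ (R + 1) * c := by nlinarith only [hR, hc1]
          gcongr
      _ = 8 * Λ * ((R + 1) * c) ^ 2 := by ring
      _ = _ := by
          rw [hL1, mul_assoc (Real.sqrt _), mul_pow (Real.sqrt _), Real.sq_sqrt (by positivity)]

lemma eLpNorm_eq {Ω : Type*} [MeasurableSpace Ω] {p : ℝ} (hp : 0 < p) (π : Measure Ω)
    (u : Ω → Rd d) : eLpNorm u (ENNReal.ofReal p) π =
      (∫⁻ z, (‖u z‖₊ : ℝ≥0∞) ^ p ∂π) ^ (1 / p) := by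
  rw [eLpNorm_eq_lintegral_rpow_enorm_toReal (by simpa using hp) ENNReal.ofReal_ne_top,
    ENNReal.toReal_ofReal hp.le]
  rfl

end Main

/-- **Improved Wasserstein stability estimate for the square root of the weighted covariance.**
If `f ∈ A(s, ℓ, ℓ)`, then for every `R > 0` and `p ≥ 2 p_M(s, ℓ)` there is `L̃ > 0`
such that `‖√C_β(μ) - √C_β(ν)‖_F ≤ L̃ ⬝ W_p(μ, ν)` for all `μ ∈ P_{p,R}(ℝ^d)` and
`ν ∈ P_p(ℝ^d)`. -/
theorem sqrt_weighted_cov_stability_improved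
    (β : ℝ) (hβ : 0 < β) (d : ℕ) (hd : 1 ≤ d)
    (s ℓ : ℝ) (hs : 0 ≤ s) (hℓ : 0 ≤ ℓ)
    (f : Rd d → ℝ) (hf : ClassA s ℓ ℓ f)
    (R : ℝ) (hR : 0 < R) (p : ℝ) (hp : 2 * pM s ℓ ≤ p) :
    ∃ L > 0, ∀ μ ν : Measure (Rd d),
      IsProbabilityMeasure μ → IsProbabilityMeasure ν →
      MomLE p R μ → MomFin p ν →
      ∀ Sμ Sν : Matrix (Fin d) (Fin d) ℝ,
        IsPSDSqrt Sμ (wCov β f μ) → IsPSDSqrt Sν (wCov β f ν) →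
        frobNorm (Sμ - Sν) ≤ L * Wp p μ ν := by
  have hp2 : 2 ≤ p := by
    unfold pM at hp
    split_ifs at hp <;> linarith
  have hp0 : 0 < p := by linarith
  obtain ⟨L, hL, hmain⟩ := coupling_main hβ hs hℓ hf hR hp hp2
  refine ⟨L, hL, fun μ ν hμ hν hμR hνp Sμ Sν hSμ hSν => ?_⟩
  unfold MomLE at hμR
  have hμR' : eLpNorm (fun x : Rd d => x) (ENNReal.ofReal p) μ ≤ ENNReal.ofReal R := by
    rw [eLpNorm_eq hp0]
    refine (ENNReal.rpow_le_rpow hμR (by positivity)).trans (le_of_eq ?_)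
    rw [ENNReal.ofReal_rpow_of_nonneg (by positivity) (by positivity), ← Real.rpow_mul hR.le,
      mul_one_div_cancel hp0.ne', Real.rpow_one]
  have hνp' : eLpNorm (fun x : Rd d => x) (ENNReal.ofReal p) ν < ⊤ := by
    rw [eLpNorm_eq hp0]
    exact ENNReal.rpow_lt_top_of_nonneg (by positivity) hνp.ne
  have h1p : (1 : ℝ≥0∞) ≤ ENNReal.ofReal p := by
    rw [← ENNReal.ofReal_one]
    exact ENNReal.ofReal_le_ofReal (by linarith)
  unfold Wp
  set A := {c : ℝ≥0∞ | ∃ π : Measure (Rd d × Rd d),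
      π.map Prod.fst = μ ∧ π.map Prod.snd = ν ∧
      c = (∫⁻ z, (‖z.1 - z.2‖₊ : ℝ≥0∞) ^ p ∂π) ^ (1 / p)} with hA
  have hfin : sInf A ≠ ⊤ := by
    have hmem : eLpNorm (fun z : Rd d × Rd d => z.1 - z.2) (ENNReal.ofReal p) (μ.prod ν) ∈ A :=
      ⟨μ.prod ν, by simp, by simp, eLpNorm_eq hp0 _ _⟩
    refine ne_top_of_le_ne_top ?_ (sInf_le hmem)
    have k1 : MemLp (fun z : Rd d × Rd d => z.1) (ENNReal.ofReal p) (μ.prod ν) := by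
      have : MemLp (fun x : Rd d => x) (ENNReal.ofReal p) μ :=
        ⟨by fun_prop, hμR'.trans_lt ENNReal.ofReal_lt_top⟩
      exact this.comp_measurePreserving measurePreserving_fst
    have k2 : MemLp (fun z : Rd d × Rd d => z.2) (ENNReal.ofReal p) (μ.prod ν) := by
      have : MemLp (fun x : Rd d => x) (ENNReal.ofReal p) ν := ⟨by fun_prop, hνp'⟩
      exact this.comp_measurePreserving measurePreserving_snd
    exact (k1.sub k2).2.ne
  have hlow : ENNReal.ofReal (frobNorm (Sμ - Sν) / L) ≤ sInf A := by
    refine le_sInf ?_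
    rintro c ⟨π, h1, h2, h3⟩
    by_cases hc : c = ⊤
    · rw [hc]; exact le_top
    have hπ : IsProbabilityMeasure π := by
      constructor
      have := hμ.measure_univ
      rw [← h1, Measure.map_apply measurable_fst MeasurableSet.univ] at this
      simpa using this
    have e1 : eLpNorm (fun z : Rd d × Rd d => z.1) (ENNReal.ofReal p) π ≤ ENNReal.ofReal R := by
      rw [← h1] at hμR'
      rw [eLpNorm_map_measure (by fun_prop) (by fun_prop)] at hμR'
      exact hμR'
    subst h1 h2
    have := hmain π hπ e1 c.toReal ENNReal.toReal_nonneg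
      (by rw [ENNReal.ofReal_toReal hc, h3, eLpNorm_eq hp0]) Sμ Sν hSμ hSν
    refine ENNReal.ofReal_le_of_le_toReal ?_
    rw [div_le_iff₀ hL]
    linarith
  have := (ENNReal.ofReal_le_iff_le_toReal hfin).1 hlow
  rw [div_le_iff₀ hL] at this
  linarith

end
end

section
/- Fix β > 0, d ≥ 1 and a positive integer J, and let f : ℝ^d → ℝ be locally Lipschitz continuous. Then for each R > 0 there exists a constant C = C(J, R) > 0 such that for all X, Y ∈ (ℝ^d)^J with |X| ≤ R and |Y| ≤ R, it holds that |M_β(X) − M_β(Y)| ≤ C |X − Y| and ‖√C_β(X) − √C_β(Y)‖_F ≤ C |X − Y|. -/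
open MeasureTheory ENNReal
open scoped NNReal

noncomputable section

/-- The weight `w_j(X) = e^{-β f(X^j)} / ∑_k e^{-β f(X^k)}` of the `j`-th particle. -/
def pWeight (β : ℝ) {d J : ℕ} (f : Rd d → ℝ) (X : Fin J → Rd d) (j : Fin J) : ℝ :=
  Real.exp (-β * f (X j)) / ∑ k, Real.exp (-β * f (X k))

/-- The weighted mean `M_β(X) = ∑_j w_j(X) X^j` of a particle ensemble. -/
def pMean (β : ℝ) {d J : ℕ} (f : Rd d → ℝ) (X : Fin J → Rd d) : Rd d :=
  ∑ j, pWeight β f X j • X j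

/-- The weighted covariance `C_β(X) = ∑_j w_j(X) (X^j - M_β(X))(X^j - M_β(X))ᵀ`. -/
def pCov (β : ℝ) {d J : ℕ} (f : Rd d → ℝ) (X : Fin J → Rd d) :
    Matrix (Fin d) (Fin d) ℝ := fun i i' =>
  ∑ j, pWeight β f X j * ((X j i - pMean β f X i) * (X j i' - pMean β f X i'))

/-- The Euclidean norm `|X| = (∑_j |X^j|²)^{1/2}` of a particle ensemble. -/
def tupleNorm {d J : ℕ} (X : Fin J → Rd d) : ℝ := Real.sqrt (∑ j, ‖X j‖ ^ 2)

section Helpers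
open scoped MatrixOrder

lemma psd_iff_gram {n : Type*} [Fintype n] [DecidableEq n] {A : Matrix n n ℝ} :
    A.PosSemidef ↔ ∃ C : Matrix n n ℝ, A = C.conjTranspose * C := by
  rw [← Matrix.nonneg_iff_posSemidef]
  exact CStarAlgebra.nonneg_iff_eq_star_mul_self

lemma trace_blocks {m n : Type*} [Fintype n] [Fintype m] (A : Matrix m m ℝ) (B : Matrix m n ℝ)
    (C : Matrix n m ℝ) (D : Matrix n n ℝ) :
    (Matrix.fromBlocks A B C D).trace = A.trace + D.trace := by
  simp [Matrix.trace, Fintype.sum_sum_type]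

lemma psd_trace_mul_nonneg {n : Type*} [Fintype n] [DecidableEq n] {A B : Matrix n n ℝ}
    (hA : A.PosSemidef) (hB : B.PosSemidef) : 0 ≤ (A * B).trace := by
  obtain ⟨C, hC⟩ := psd_iff_gram.1 hA
  rw [hC, Matrix.mul_assoc, Matrix.trace_mul_comm]
  exact (hB.mul_mul_conjTranspose_same C).trace_nonneg

lemma psd_add_sub {n : Type*} [Fintype n] [DecidableEq n] {P H : Matrix n n ℝ}
    (hP : P.PosSemidef) (hH : H.IsHermitian) (h : P * P = H * H) :
    (P + H).PosSemidef ∧ (P - H).PosSemidef := by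
  have hsa : IsSelfAdjoint H := hH
  have e : CFC.abs H = P := by
    rw [CFC.abs, hsa.star_eq]
    exact CFC.sqrt_unique h hP.nonneg
  have h1 := CFC.abs_add_self H hsa
  have h2 := CFC.abs_sub_self H hsa
  rw [e] at h1 h2
  constructor
  · rw [h1, ← Matrix.nonneg_iff_posSemidef]
    exact nsmul_nonneg (CFC.posPart_nonneg H) 2
  · rw [h2, ← Matrix.nonneg_iff_posSemidef]
    exact nsmul_nonneg (CFC.negPart_nonneg H) 2

lemma trace_abs_ineq {n : Type*} [Fintype n] [DecidableEq n] {P H Q K : Matrix n n ℝ}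
    (hP : P.PosSemidef) (hH : H.IsHermitian) (h : P * P = H * H)
    (hQ : Q.PosSemidef) (hK : K.IsHermitian) (h' : Q * Q = K * K) :
    ((P - Q) * (P - Q)).trace ≤ ((H - K) * (H - K)).trace := by
  obtain ⟨a1, a2⟩ := psd_add_sub hP hH h
  obtain ⟨b1, b2⟩ := psd_add_sub hQ hK h'
  have t1 := psd_trace_mul_nonneg a1 b2
  have t2 := psd_trace_mul_nonneg a2 b1
  have c1 := Matrix.trace_mul_comm P Q
  have c2 := Matrix.trace_mul_comm H K
  simp only [Matrix.mul_add, Matrix.add_mul, Matrix.mul_sub, Matrix.sub_mul, Matrix.trace_add,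
    Matrix.trace_sub, h, h'] at *
  linarith

lemma sqrt_lip {m n : Type*} [Fintype n] [DecidableEq n] [Fintype m] [DecidableEq m]
    {S T : Matrix m m ℝ} {A B : Matrix m n ℝ}
    (hS : S.PosSemidef) (hT : T.PosSemidef) (hA : S * S = A * A.transpose)
    (hB : T * T = B * B.transpose) :
    ((S - T) * (S - T)).trace ≤ 2 * ((A - B) * (A - B).transpose).trace := by
  have key : ∀ A : Matrix m n ℝ, ∃ S' : Matrix n n ℝ, S'.PosSemidef ∧ S' * S' = A.transpose * A := by
    intro A
    have : 0 ≤ A.transpose * A := by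
      have := Matrix.posSemidef_conjTranspose_mul_self A
      rw [Matrix.conjTranspose_eq_transpose_of_trivial] at this
      exact this.nonneg
    refine ⟨CFC.sqrt (A.transpose * A), Matrix.nonneg_iff_posSemidef.1 (CFC.sqrt_nonneg _), ?_⟩
    exact CFC.sqrt_mul_sqrt_self _ this
  have psd : ∀ {S : Matrix m m ℝ} {S' : Matrix n n ℝ}, S.PosSemidef → S'.PosSemidef →
      (Matrix.fromBlocks S 0 0 S').PosSemidef := by
    intro S S' h h'
    obtain ⟨C, hC⟩ := psd_iff_gram.1 h
    obtain ⟨D, hD⟩ := psd_iff_gram.1 h'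
    rw [psd_iff_gram]
    refine ⟨Matrix.fromBlocks C 0 0 D, ?_⟩
    rw [Matrix.fromBlocks_conjTranspose, Matrix.fromBlocks_multiply, hC, hD]
    simp
  have herm : ∀ A : Matrix m n ℝ, (Matrix.fromBlocks 0 A A.transpose 0).IsHermitian := by
    intro A
    simp [Matrix.IsHermitian, Matrix.fromBlocks_transpose,
      Matrix.conjTranspose_eq_transpose_of_trivial]
  obtain ⟨S', hS', eS'⟩ := key A
  obtain ⟨T', hT', eT'⟩ := key B
  have main := trace_abs_ineq (psd hS hS') (herm A)
    (by simp [Matrix.fromBlocks_multiply, hA, eS']) (psd hT hT') (herm B)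
    (by simp [Matrix.fromBlocks_multiply, hB, eT'])
  have pos : 0 ≤ ((S' - T') * (S' - T')).trace := by
    have h := (Matrix.posSemidef_conjTranspose_mul_self (S' - T')).trace_nonneg
    rwa [(hS'.isHermitian.sub hT'.isHermitian).eq] at h
  have c := Matrix.trace_mul_comm (A - B) (A - B).transpose
  rw [sub_eq_add_neg, sub_eq_add_neg (Matrix.fromBlocks 0 A _ _), Matrix.fromBlocks_neg,
    Matrix.fromBlocks_neg, Matrix.fromBlocks_add, Matrix.fromBlocks_add,
    Matrix.fromBlocks_multiply, Matrix.fromBlocks_multiply, trace_blocks,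
    trace_blocks] at main
  simp only [← sub_eq_add_neg, sub_zero, Matrix.mul_zero, Matrix.zero_mul, add_zero,
    zero_add, ← Matrix.transpose_sub] at main
  linarith

end Helpers

/-- Columns `√w_j (X^j - M)` as a function of the particles and the values of `f`. -/
def wt {J : ℕ} (β : ℝ) (v : Fin J → ℝ) (j : Fin J) : ℝ :=
  Real.exp (-β * v j) / ∑ k, Real.exp (-β * v k)

def mn {d J : ℕ} (β : ℝ) (p : (Fin J → Rd d) × (Fin J → ℝ)) : Rd d :=
  ∑ j, wt β p.2 j • p.1 j

def fac {d J : ℕ} (β : ℝ) (p : (Fin J → Rd d) × (Fin J → ℝ)) (i : Fin d) (j : Fin J) : ℝ :=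
  Real.sqrt (wt β p.2 j) * (p.1 j i - mn β p i)

lemma wt_pos {J : ℕ} (β : ℝ) (v : Fin J → ℝ) (j : Fin J) : 0 < wt β v j := by
  unfold wt
  exact div_pos (Real.exp_pos _) (Finset.sum_pos (fun _ _ => Real.exp_pos _) ⟨j, by simp⟩)

lemma wt_contDiff {J : ℕ} (β : ℝ) (j : Fin J) : ContDiff ℝ 1 (fun v => wt β v j) := by
  unfold wt
  refine ContDiff.div (by fun_prop) (by fun_prop) (fun v => ?_)
  exact (Finset.sum_pos (fun _ _ => Real.exp_pos _) ⟨j, by simp⟩).ne'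

lemma mn_contDiff {d J : ℕ} (β : ℝ) : ContDiff ℝ 1 (mn (d := d) (J := J) β) := by
  unfold mn
  refine ContDiff.sum fun j _ => ContDiff.smul ((wt_contDiff β j).comp contDiff_snd) (by fun_prop)

lemma fac_contDiff {d J : ℕ} (β : ℝ) : ContDiff ℝ 1 (fac (d := d) (J := J) β) := by
  refine contDiff_pi.2 fun i => contDiff_pi.2 fun j => ?_
  unfold fac
  refine ContDiff.mul (ContDiff.sqrt ((wt_contDiff β j).comp contDiff_snd)
    (fun p => (wt_pos β p.2 j).ne')) (ContDiff.sub (by fun_prop) ?_)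
  have := mn_contDiff (d := d) (J := J) β
  fun_prop

lemma norm_le_tupleNorm {d J : ℕ} (X : Fin J → Rd d) : ‖X‖ ≤ tupleNorm X := by
  refine (pi_norm_le_iff_of_nonneg (Real.sqrt_nonneg _)).2 fun j => ?_
  apply Real.le_sqrt_of_sq_le
  exact Finset.single_le_sum (f := fun j => ‖X j‖ ^ 2) (fun _ _ => sq_nonneg _) (Finset.mem_univ j)

lemma lip_ball {d J : ℕ} {F : Type*} [NormedAddCommGroup F] [NormedSpace ℝ F]
    {f : Rd d → ℝ} (hf : LocallyLipschitz f)
    {G : (Fin J → Rd d) × (Fin J → ℝ) → F} (hG : ContDiff ℝ 1 G) (R : ℝ) :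
    ∃ K : ℝ, 0 ≤ K ∧ ∀ X Y : Fin J → Rd d, tupleNorm X ≤ R → tupleNorm Y ≤ R →
      ‖G (X, fun j => f (X j)) - G (Y, fun j => f (Y j))‖ ≤ K * tupleNorm (X - Y) := by
  have h1 : LocallyLipschitz (fun X : Fin J → Rd d => fun j => f (X j)) := by
    have h0 : ∀ j, LocallyLipschitz (fun X : Fin J → Rd d => f (X j)) := fun j =>
      hf.comp (LipschitzWith.eval j).locallyLipschitz
    intro X
    choose K t ht hK using fun j => h0 j X
    refine ⟨∑ j, K j, ⋂ j, t j, Filter.iInter_mem.2 ht, fun x hx y hy => ?_⟩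
    refine edist_pi_le_iff.2 fun j => ?_
    refine (hK j (Set.mem_iInter.1 hx j) (Set.mem_iInter.1 hy j)).trans ?_
    gcongr
    exact Finset.single_le_sum (fun _ _ => zero_le) (Finset.mem_univ j)
  have h2 := (hG.locallyLipschitz).comp (LocallyLipschitz.id.prodMk h1)
  obtain ⟨K, hK⟩ := (h2.locallyLipschitzOn
    (s := Metric.closedBall 0 R)).exists_lipschitzOnWith_of_compact (isCompact_closedBall _ _)
  refine ⟨K, K.2, fun X Y hX hY => ?_⟩
  have := hK.norm_sub_le (x := X) (y := Y) (by simpa using (norm_le_tupleNorm X).trans hX)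
    (by simpa using (norm_le_tupleNorm Y).trans hY)
  exact this.trans (mul_le_mul_of_nonneg_left (norm_le_tupleNorm _) K.2)

lemma pCov_eq {d J : ℕ} (β : ℝ) (f : Rd d → ℝ) (X : Fin J → Rd d) :
    pCov β f X = (Matrix.of (fac β (X, fun j => f (X j)))) *
      (Matrix.of (fac β (X, fun j => f (X j)))).transpose := by
  ext i i'
  simp only [Matrix.mul_apply, Matrix.transpose_apply, Matrix.of_apply, fac, pCov]
  refine Finset.sum_congr rfl fun j _ => ?_
  have h := Real.mul_self_sqrt (wt_pos β (fun j => f (X j)) j).le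
  change wt β (fun j => f (X j)) j * ((X j i - mn β (X, fun j => f (X j)) i) *
    (X j i' - mn β (X, fun j => f (X j)) i')) = _
  linear_combination (-((X j i - mn β (X, fun j => f (X j)) i) *
    (X j i' - mn β (X, fun j => f (X j)) i'))) * h

/-- **Local Lipschitz continuity of the weighted mean and square root covariance of a
particle ensemble.**
If `f` is locally Lipschitz, then for each `R > 0` there is `C > 0` such that for all
ensembles `X, Y` with `|X| ≤ R`, `|Y| ≤ R`, one has `|M_β(X) - M_β(Y)| ≤ C |X - Y|` and
`‖√C_β(X) - √C_β(Y)‖_F ≤ C |X - Y|`. -/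
theorem particle_weighted_moments_local_lipschitz
    (β : ℝ) (hβ : 0 < β) (d : ℕ) (hd : 1 ≤ d) (J : ℕ) (hJ : 1 ≤ J)
    (f : Rd d → ℝ) (hf : LocallyLipschitz f) (R : ℝ) (hR : 0 < R) :
    ∃ C > 0, ∀ X Y : Fin J → Rd d, tupleNorm X ≤ R → tupleNorm Y ≤ R →
      ‖pMean β f X - pMean β f Y‖ ≤ C * tupleNorm (X - Y) ∧
      ∀ SX SY : Matrix (Fin d) (Fin d) ℝ,
        IsPSDSqrt SX (pCov β f X) → IsPSDSqrt SY (pCov β f Y) →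
        frobNorm (SX - SY) ≤ C * tupleNorm (X - Y) := by
  obtain ⟨K, hK0, hK⟩ := lip_ball (J := J) hf (mn_contDiff (d := d) β) R
  obtain ⟨L, hL0, hL⟩ := lip_ball (J := J) hf (fac_contDiff (d := d) β) R
  refine ⟨K + Real.sqrt (2 * d * J) * L + 1, by positivity, fun X Y hX hY => ?_⟩
  have ht : 0 ≤ tupleNorm (X - Y) := Real.sqrt_nonneg _
  have hs := Real.sqrt_nonneg (2 * (d : ℝ) * J)
  refine ⟨(hK X Y hX hY).trans ?_, fun SX SY h1 h2 => ?_⟩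
  · gcongr
    nlinarith [mul_nonneg hs hL0]
  refine le_trans ?_ (show Real.sqrt (2 * d * J) * L * tupleNorm (X - Y) ≤ _ by gcongr; linarith)
  set t := tupleNorm (X - Y)
  have key := sqrt_lip h1.1 h2.1 (h1.2.trans (pCov_eq β f X)) (h2.2.trans (pCov_eq β f Y))
  have hsym := (h1.1.isHermitian.sub h2.1.isHermitian)
  have e1 : ∑ i, ∑ j, ((SX - SY) i j) ^ 2 = ((SX - SY) * (SX - SY)).trace := by
    simp only [Matrix.trace, Matrix.diag, Matrix.mul_apply]
    refine Finset.sum_congr rfl fun i _ => Finset.sum_congr rfl fun j _ => ?_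
    have := hsym.apply i j
    rw [star_trivial] at this
    rw [this, sq]
  have hL' := hL X Y hX hY
  unfold frobNorm
  rw [e1]
  apply Real.sqrt_le_iff.2
  refine ⟨by positivity, key.trans ?_⟩
  have e2 : ∀ D : Matrix (Fin d) (Fin J) ℝ, (∀ i j, |D i j| ≤ L * t) →
      (D * D.transpose).trace ≤ d * J * (L * t) ^ 2 := by
    intro D hD
    simp only [Matrix.trace, Matrix.diag, Matrix.mul_apply, Matrix.transpose_apply]
    calc _ ≤ ∑ i : Fin d, ∑ j : Fin J, (L * t) ^ 2 := by
          gcongr with i _ j _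
          rw [← sq, ← sq_abs]
          have := hD i j
          gcongr
      _ = _ := by simp; ring
  have e3 := e2 (Matrix.of (fac β (X, fun j => f (X j))) - Matrix.of (fac β (Y, fun j => f (Y j))))
    (fun i j => ((norm_le_pi_norm _ j).trans (norm_le_pi_norm
      (fac β (X, fun j => f (X j)) - fac β (Y, fun j => f (Y j))) i)).trans hL')
  rw [mul_assoc, mul_pow, Real.sq_sqrt (by positivity)]
  linarith

end
end

section
/- Fix β > 0, d ≥ 1, s ≥ 0, ℓ ≥ 0 and p ≥ 2, and suppose f ∈ A(s, ℓ, ℓ). Then there exists a constant C > 0, depending only on f, β and p, such that for every Borel probability measure μ on ℝ^d with ∫ |x|^p μ(dx) < ∞, both |M_β(μ)| ≤ C (∫ |x|^p μ(dx))^{1/p} and ‖√C_β(μ)‖_F ≤ C (∫ |x|^p μ(dx))^{1/p}. -/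
open MeasureTheory ENNReal
open scoped NNReal

noncomputable section

lemma wFn_compare (β : ℝ) (hβ : 0 < β) {d : ℕ} (s ℓ : ℝ) (hℓ : 0 ≤ ℓ)
    (f : Rd d → ℝ) (hf : ClassA s ℓ ℓ f) :
    ∃ K > 0, ∃ D > 0, ∀ r : ℝ, 0 < r → ∀ x y : Rd d, ‖y‖ ≤ 2 * r → K * r < ‖x‖ →
      wFn β f x ≤ D * wFn β f y := by
  obtain ⟨cl, hcl, Cl, hCl, hl⟩ := hf.growth_lower
  obtain ⟨cu, hcu, Cu, hCu, hu⟩ := hf.growth_upper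
  have hq : 0 < cu / cl := by positivity
  refine ⟨(cu / cl) ^ (1 / ℓ) * 2, by positivity, Real.exp (β * (cu + Cu + Cl)),
    by positivity, ?_⟩
  intro r hr x y hy hx
  unfold wFn
  rw [← Real.exp_add]
  apply Real.exp_le_exp.mpr
  have h1 := hl x
  have h2 := hu y
  have h3 : cu * ‖y‖ ^ ℓ ≤ cu + cl * ‖x‖ ^ ℓ := by
    rcases hℓ.eq_or_lt with h0 | h0
    · subst h0
      simp only [Real.rpow_zero]
      linarith
    · have e1 : ‖y‖ ^ ℓ ≤ (2 * r) ^ ℓ := Real.rpow_le_rpow (norm_nonneg _) hy hℓ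
      have e2 : ((cu / cl) ^ (1 / ℓ) * 2 * r) ^ ℓ ≤ ‖x‖ ^ ℓ :=
        Real.rpow_le_rpow (by positivity) hx.le hℓ
      rw [mul_assoc, Real.mul_rpow (by positivity) (by positivity), ← Real.rpow_mul hq.le,
        one_div_mul_cancel h0.ne', Real.rpow_one] at e2
      have e3 : cl * (cu / cl * (2 * r) ^ ℓ) = cu * (2 * r) ^ ℓ := by field_simp
      have e4 := mul_le_mul_of_nonneg_left e2 hcl.le
      have e5 := mul_le_mul_of_nonneg_left e1 hcu.le
      linarith
  have h4 : f y - f x ≤ cu + Cu + Cl := by linarith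
  nlinarith [mul_le_mul_of_nonneg_left h4 hβ.le]

lemma ClassA.continuous {d : ℕ} {s ℓ u : ℝ} (hs : 0 ≤ s) {f : Rd d → ℝ}
    (hf : ClassA s ℓ u f) : Continuous f := by
  obtain ⟨L, hL, h⟩ := hf.lip
  rw [continuous_iff_continuousAt]
  intro x
  have hg : Continuous (fun y : Rd d => L * (1 + ‖y‖ + ‖x‖) ^ s * ‖y - x‖) := by
    refine (continuous_const.mul (Continuous.rpow_const (by fun_prop) ?_)).mul (by fun_prop)
    intro y
    exact Or.inr hs
  have ht := hg.tendsto x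
  simp only [sub_self, norm_zero, mul_zero] at ht
  refine tendsto_iff_dist_tendsto_zero.mpr ?_
  refine squeeze_zero (fun _ => dist_nonneg) (fun y => ?_) ht
  rw [Real.dist_eq]
  exact h y x

lemma integrable_wFn_mul (β : ℝ) (hβ : 0 < β) {d : ℕ} {s ℓ u : ℝ} (hs : 0 ≤ s)
    {f : Rd d → ℝ} (hf : ClassA s ℓ u f) (μ : Measure (Rd d)) {g : Rd d → ℝ}
    (hg : Integrable g μ) : Integrable (fun x => wFn β f x * g x) μ := by
  have hc : Continuous (wFn β f) := by
    unfold wFn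
    have := hf.continuous hs
    fun_prop
  obtain ⟨b, hb⟩ := hf.bddBelow
  refine hg.bdd_mul (c := Real.exp (-β * b)) hc.aestronglyMeasurable (Filter.Eventually.of_forall fun x => ?_)
  unfold wFn
  rw [Real.norm_eq_abs, Real.abs_exp]
  apply Real.exp_le_exp.mpr
  have := hb (Set.mem_range_self x)
  nlinarith

lemma wFn_second_moment (β : ℝ) (hβ : 0 < β) {d : ℕ} (s ℓ : ℝ) (hs : 0 ≤ s) (hℓ : 0 ≤ ℓ)
    (f : Rd d → ℝ) (hf : ClassA s ℓ ℓ f) :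
    ∃ C > 0, ∀ μ : Measure (Rd d), IsProbabilityMeasure μ →
      Integrable (fun x => ‖x‖ ^ 2) μ → ∀ r : ℝ, 0 < r → ∫ x, ‖x‖ ^ 2 ∂μ ≤ r ^ 2 →
      ∫ x, wFn β f x * ‖x‖ ^ 2 ∂μ ≤ C * r ^ 2 * ∫ x, wFn β f x ∂μ := by
  obtain ⟨K, hK, D, hD, h⟩ := wFn_compare β hβ s ℓ hℓ f hf
  refine ⟨K ^ 2 + 4 / 3 * D, by positivity, ?_⟩
  intro μ hμ hi r hr hr2
  have hw : ∀ x, 0 ≤ wFn β f x := fun x => (Real.exp_pos _).le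
  have hwi : Integrable (fun x => wFn β f x) μ := by
    simpa using integrable_wFn_mul β hβ hs hf μ (integrable_const (1 : ℝ))
  set Z := ∫ x, wFn β f x ∂μ with hZ
  have hZ0 : 0 ≤ Z := integral_nonneg hw
  -- Markov-type bound
  have hM : ∀ x, K * r < ‖x‖ → 3 / 4 * wFn β f x ≤ D * Z := by
    intro x hx
    have hpt : ∀ y : Rd d, wFn β f x * (1 - ‖y‖ ^ 2 / (4 * r ^ 2)) ≤ D * wFn β f y := by
      intro y
      by_cases hy : ‖y‖ ≤ 2 * r
      · refine le_trans ?_ (h r hr x y hy hx)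
        have : 0 ≤ ‖y‖ ^ 2 / (4 * r ^ 2) := by positivity
        nlinarith [hw x]
      · push Not at hy
        have : 1 ≤ ‖y‖ ^ 2 / (4 * r ^ 2) := by
          rw [le_div_iff₀ (by positivity)]
          nlinarith
        have h2 := mul_nonneg hD.le (hw y)
        nlinarith [hw x]
    have hint := integral_mono (((integrable_const (1:ℝ)).sub (hi.div_const (4 * r ^ 2))).const_mul
      (wFn β f x)) (hwi.const_mul D) hpt
    simp only [Pi.sub_apply] at hint
    rw [integral_const_mul, integral_const_mul, integral_sub (integrable_const _)
      (hi.div_const _), integral_div] at hint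
    simp only [integral_const, probReal_univ, smul_eq_mul, mul_one] at hint
    refine le_trans ?_ hint
    have : (∫ x, ‖x‖ ^ 2 ∂μ) / (4 * r ^ 2) ≤ 1 / 4 := by
      rw [div_le_iff₀ (by positivity)]
      linarith
    nlinarith [hw x]
  have hpt : ∀ x, wFn β f x * ‖x‖ ^ 2 ≤ K ^ 2 * r ^ 2 * wFn β f x + 4 / 3 * D * Z * ‖x‖ ^ 2 := by
    intro x
    by_cases hx : K * r < ‖x‖
    · have h1 := hM x hx
      have h2 : wFn β f x ≤ 4 / 3 * D * Z := by linarith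
      have h3 := mul_le_mul_of_nonneg_right h2 (sq_nonneg ‖x‖)
      have h4 : 0 ≤ K ^ 2 * r ^ 2 * wFn β f x := mul_nonneg (by positivity) (hw x)
      linarith
    · push Not at hx
      have h1 : ‖x‖ ^ 2 ≤ (K * r) ^ 2 := by gcongr
      have h2 := mul_le_mul_of_nonneg_left h1 (hw x)
      have h3 : 0 ≤ 4 / 3 * D * Z * ‖x‖ ^ 2 := by positivity
      nlinarith
  have hint := integral_mono (integrable_wFn_mul β hβ hs hf μ hi)
    ((hwi.const_mul (K ^ 2 * r ^ 2)).add (hi.const_mul (4 / 3 * D * Z))) hpt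
  simp only [Pi.add_apply] at hint
  rw [integral_add (hwi.const_mul _) (hi.const_mul _), integral_const_mul,
    integral_const_mul] at hint
  have : 4 / 3 * D * Z * ∫ x, ‖x‖ ^ 2 ∂μ ≤ 4 / 3 * D * Z * r ^ 2 := by gcongr
  refine hint.trans ?_
  rw [← hZ]
  linarith

lemma wCov_diag (β : ℝ) (hβ : 0 < β) {d : ℕ} {s ℓ u : ℝ} (hs : 0 ≤ s)
    {f : Rd d → ℝ} (hf : ClassA s ℓ u f) (μ : Measure (Rd d)) (hμ : IsProbabilityMeasure μ)
    (hm : MemLp (fun x : Rd d => x) 2 μ) (i : Fin d) :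
    0 ≤ wCov β f μ i i ∧
    wCov β f μ i i = (∫ x, wFn β f x ∂μ)⁻¹ * (∫ x, wFn β f x * (x i) ^ 2 ∂μ)
      - (wMean β f μ i) ^ 2 := by
  have hw : ∀ x, 0 ≤ wFn β f x := fun x => (Real.exp_pos _).le
  have hwi : Integrable (fun x => wFn β f x) μ := by
    simpa using integrable_wFn_mul β hβ hs hf μ (integrable_const (1 : ℝ))
  have hZ : 0 < ∫ x, wFn β f x ∂μ := by
    unfold wFn at hwi ⊢
    exact integral_exp_pos hwi
  have hmi : MemLp (fun x : Rd d => x i) 2 μ :=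
    (EuclideanSpace.proj i : Rd d →L[ℝ] ℝ).comp_memLp' hm
  have hi1 : Integrable (fun x : Rd d => x i) μ := hmi.integrable (by norm_num)
  have hi2 : Integrable (fun x : Rd d => (x i) ^ 2) μ := hmi.integrable_sq
  have hid : Integrable (fun x : Rd d => x) μ := hm.integrable (by norm_num)
  have hc : Continuous (wFn β f) := by
    unfold wFn
    have := hf.continuous hs
    fun_prop
  have hsm : Integrable (fun x : Rd d => wFn β f x • x) μ := by
    have := integrable_wFn_mul β hβ hs hf μ hid.norm
    refine this.mono' (hc.aestronglyMeasurable.smul hid.1) (Filter.Eventually.of_forall fun x => ?_)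
    rw [norm_smul, Real.norm_of_nonneg (hw x)]
  have hmean : (∫ x, wFn β f x ∂μ) * wMean β f μ i = ∫ x, wFn β f x * x i ∂μ := by
    have h1 : ∫ x, wFn β f x * x i ∂μ = (∫ x, wFn β f x • x ∂μ) i :=
      (EuclideanSpace.proj i : Rd d →L[ℝ] ℝ).integral_comp_comm hsm
    rw [h1]
    unfold wMean
    rw [PiLp.smul_apply, smul_eq_mul, mul_inv_cancel_left₀ hZ.ne']
  refine ⟨mul_nonneg (inv_nonneg.mpr hZ.le) (integral_nonneg fun x =>
    mul_nonneg (hw x) (mul_self_nonneg _)), ?_⟩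
  unfold wCov
  set m := wMean β f μ i
  set Z := ∫ x, wFn β f x ∂μ
  have e : ∀ x : Rd d, wFn β f x * ((x i - m) * (x i - m)) =
      (wFn β f x * (x i) ^ 2 - 2 * m * (wFn β f x * x i)) + m ^ 2 * wFn β f x := by
    intro x
    ring
  have j1 := integrable_wFn_mul β hβ hs hf μ hi1
  have j2 := integrable_wFn_mul β hβ hs hf μ hi2
  simp_rw [e]
  have j3 : Integrable (fun x : Rd d => wFn β f x * (x i) ^ 2 - 2 * m * (wFn β f x * x i)) μ :=
    j2.sub (j1.const_mul _)
  rw [integral_add j3 (hwi.const_mul _),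
    integral_sub j2 (j1.const_mul _), integral_const_mul, integral_const_mul, ← hmean]
  field_simp
  ring

/-- **Bound on the weighted mean and the square root of the weighted covariance by
moments.**
If `f ∈ A(s, ℓ, ℓ)` and `p ≥ 2`, there is `C > 0` such that for every probability
measure `μ` with finite `p`-th moment, `|M_β(μ)| ≤ C (∫ |x|^p dμ)^{1/p}` and
`‖√C_β(μ)‖_F ≤ C (∫ |x|^p dμ)^{1/p}`. -/
theorem weighted_moments_norm_bound
    (β : ℝ) (hβ : 0 < β) (d : ℕ) (hd : 1 ≤ d)
    (s ℓ : ℝ) (hs : 0 ≤ s) (hℓ : 0 ≤ ℓ) (p : ℝ) (hp : 2 ≤ p)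
    (f : Rd d → ℝ) (hf : ClassA s ℓ ℓ f) :
    ∃ C > 0, ∀ μ : Measure (Rd d), IsProbabilityMeasure μ → MomFin p μ →
      ‖wMean β f μ‖ ≤ C * ((∫⁻ x, (‖x‖₊ : ℝ≥0∞) ^ p ∂μ).toReal) ^ (1 / p) ∧
      ∀ S : Matrix (Fin d) (Fin d) ℝ, IsPSDSqrt S (wCov β f μ) →
        frobNorm S ≤ C * ((∫⁻ x, (‖x‖₊ : ℝ≥0∞) ^ p ∂μ).toReal) ^ (1 / p) := by
  obtain ⟨C, hC, h⟩ := wFn_second_moment β hβ s ℓ hs hℓ f hf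
  refine ⟨Real.sqrt C, Real.sqrt_pos.mpr hC, ?_⟩
  intro μ hμ hfin
  have hp0 : 0 < p := by linarith
  have hpE : ENNReal.ofReal p ≠ 0 := by simpa using hp0
  have hen : eLpNorm (fun x : Rd d => x) (ENNReal.ofReal p) μ =
      (∫⁻ x, (‖x‖₊ : ℝ≥0∞) ^ p ∂μ) ^ (1 / p) := by
    rw [eLpNorm_eq_lintegral_rpow_enorm_toReal hpE ENNReal.ofReal_ne_top,
      ENNReal.toReal_ofReal hp0.le]
    rfl
  have hlt : (∫⁻ x, (‖x‖₊ : ℝ≥0∞) ^ p ∂μ) ^ (1 / p) < ⊤ :=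
    ENNReal.rpow_lt_top_of_nonneg (by positivity) hfin.ne
  have hid : AEStronglyMeasurable (fun x : Rd d => x) μ := continuous_id.aestronglyMeasurable
  have hmp : MemLp (fun x : Rd d => x) (ENNReal.ofReal p) μ := ⟨hid, hen ▸ hlt⟩
  have h2p : (2 : ℝ≥0∞) ≤ ENNReal.ofReal p := by
    rw [← ENNReal.ofReal_ofNat]
    exact ENNReal.ofReal_le_ofReal hp
  have hm : MemLp (fun x : Rd d => x) 2 μ := hmp.mono_exponent h2p
  have hi : Integrable (fun x : Rd d => ‖x‖ ^ 2) μ := hm.integrable_norm_pow (by norm_num)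
  rw [ENNReal.toReal_rpow]
  set R := ((∫⁻ x, (‖x‖₊ : ℝ≥0∞) ^ p ∂μ) ^ (1 / p)).toReal with hR
  have hR0 : 0 ≤ R := ENNReal.toReal_nonneg
  have hR2 : ∫ x, ‖x‖ ^ 2 ∂μ ≤ R ^ 2 := by
    have h1 : eLpNorm (fun x : Rd d => x) 2 μ ≤ eLpNorm (fun x : Rd d => x) (ENNReal.ofReal p) μ :=
      eLpNorm_le_eLpNorm_of_exponent_le h2p hid
    have h2 := ENNReal.toReal_mono hmp.2.ne h1
    rw [hen, ← hR, hm.eLpNorm_eq_integral_rpow_norm (by norm_num) (by norm_num)] at h2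
    simp only [ENNReal.toReal_ofNat, Real.rpow_ofNat] at h2
    have h0 : 0 ≤ ∫ x : Rd d, ‖x‖ ^ 2 ∂μ := integral_nonneg fun x => by positivity
    rw [ENNReal.toReal_ofReal (by positivity)] at h2
    have h3 := pow_le_pow_left₀ (by positivity) h2 2
    rwa [← Real.rpow_mul_natCast h0, show (2 : ℝ)⁻¹ * ((2 : ℕ) : ℝ) = 1 by norm_num,
      Real.rpow_one] at h3
  have hwi : Integrable (fun x => wFn β f x) μ := by
    simpa using integrable_wFn_mul β hβ hs hf μ (integrable_const (1 : ℝ))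
  have hZ : 0 < ∫ x, wFn β f x ∂μ := by
    unfold wFn at hwi ⊢
    exact integral_exp_pos hwi
  have key : ∫ x, wFn β f x * ‖x‖ ^ 2 ∂μ ≤ C * R ^ 2 * ∫ x, wFn β f x ∂μ := by
    have ht : Filter.Tendsto (fun r : ℝ => C * r ^ 2 * ∫ x, wFn β f x ∂μ)
        (nhdsWithin R (Set.Ioi R)) (nhds (C * R ^ 2 * ∫ x, wFn β f x ∂μ)) :=
      ((by fun_prop : Continuous (fun r : ℝ => C * r ^ 2 * ∫ x, wFn β f x ∂μ)).tendsto
        R).mono_left nhdsWithin_le_nhds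
    refine ge_of_tendsto ht ?_
    filter_upwards [self_mem_nhdsWithin] with r hr
    have hr' : R < r := hr
    refine h μ hμ hi r (by linarith) (hR2.trans ?_)
    gcongr
  have hdiag := wCov_diag β hβ hs hf μ hμ hm
  have hsum : ∑ i, wCov β f μ i i + ‖wMean β f μ‖ ^ 2 ≤ C * R ^ 2 := by
    have e1 : ∑ i, wCov β f μ i i + ‖wMean β f μ‖ ^ 2 =
        (∫ x, wFn β f x ∂μ)⁻¹ * ∫ x, wFn β f x * ‖x‖ ^ 2 ∂μ := by
      simp_rw [EuclideanSpace.real_norm_sq_eq, Finset.mul_sum]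
      rw [integral_finsetSum, Finset.mul_sum, ← Finset.sum_add_distrib]
      · refine Finset.sum_congr rfl fun i _ => ?_
        rw [(hdiag i).2]
        ring
      · intro i _
        exact integrable_wFn_mul β hβ hs hf μ
          ((EuclideanSpace.proj i : Rd d →L[ℝ] ℝ).comp_memLp' hm).integrable_sq
    rw [e1, inv_mul_le_iff₀ hZ]
    linarith
  have hCR : Real.sqrt C * R = Real.sqrt (C * R ^ 2) := by
    rw [Real.sqrt_mul hC.le, Real.sqrt_sq hR0]
  rw [hCR]
  have htr : 0 ≤ ∑ i, wCov β f μ i i := Finset.sum_nonneg fun i _ => (hdiag i).1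
  refine ⟨Real.le_sqrt_of_sq_le (by linarith), ?_⟩
  rintro S ⟨hS, hSS⟩
  unfold frobNorm
  apply Real.sqrt_le_sqrt
  have e : ∑ i, ∑ j, (S i j) ^ 2 = ∑ i, wCov β f μ i i := by
    refine Finset.sum_congr rfl fun i _ => ?_
    rw [← hSS, Matrix.mul_apply]
    refine Finset.sum_congr rfl fun j _ => ?_
    have := hS.1.apply i j
    simp only [star_trivial] at this
    rw [this, sq]
  rw [e]
  nlinarith [sq_nonneg ‖wMean β f μ‖]


end
end
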